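/- arXiv:2109.01027 — 5 statements merged into one kernel-verified Lean document; each statement's English description precedes it below -/
import Mathlib

section
/- Let Ω ⊂ ℝ^N be a bounded domain, g : ℝ^N ∖ Ω → ℝ a bounded Borel measurable function and f : Ω → ℝ a bounded Borel measurable function. Then there exists a bounded Borel measurable function u : ℝ^N → ℝ with u = g on ℝ^N ∖ Ω satisfying the dynamic programming principle u(x) = α ∫ u(x+εz) dν_x(z) + β ⨍_{B_ε(x)} u(y) dy + ε² f(x) for every x ∈ Ω. -/
open MeasureTheory Metric

noncomputable section

/-- bounded measurable functions are integrable for finite measures -/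
theorem dpp_integrable {E : Type*} [MeasurableSpace E] (μ : Measure E) [IsFiniteMeasure μ]
    {w : E → ℝ} (hw : Measurable w) (hb : ∃ M, ∀ y, |w y| ≤ M) : Integrable w μ := by
  obtain ⟨M, hM⟩ := hb
  exact Integrable.of_bound hw.aestronglyMeasurable M (Filter.Eventually.of_forall hM)

theorem dpp_abstract {E : Type*} [MeasurableSpace E] (κ : E → Measure E)
    [hp : ∀ x, IsProbabilityMeasure (κ x)]
    (hm : ∀ w : E → ℝ, Measurable w → (∃ M, ∀ y, |w y| ≤ M) → Measurable fun x => ∫ y, w y ∂κ x)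
    (D : Set E) (hD : MeasurableSet D) (φ : E → ℝ) (hφ : Measurable φ) (hφ1 : ∀ x, 1 ≤ φ x)
    (C c : ℝ) (hφC : ∀ x, φ x ≤ C) (hc : 0 < c)
    (hL : ∀ x ∈ D, ∫ y, φ y ∂κ x ≤ φ x - c)
    (g h : E → ℝ) (hg : Measurable g) (hgb : ∃ M, ∀ y, |g y| ≤ M)
    (hh : Measurable h) (hhb : ∃ M, ∀ y, |h y| ≤ M) :
    ∃ u : E → ℝ, Measurable u ∧ (∃ M, ∀ y, |u y| ≤ M) ∧ (∀ x ∉ D, u x = g x) ∧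
      (∀ x ∈ D, u x = ∫ y, u y ∂κ x + h x) := by
  classical
  obtain ⟨G, hG⟩ := hgb
  obtain ⟨H, hH⟩ := hhb
  obtain ⟨A, hA0, hAG, hAH⟩ : ∃ A : ℝ, 0 ≤ A ∧ G ≤ A ∧ H ≤ A * c := by
    refine ⟨max 0 (max G (H / c)), le_max_left _ _, le_trans (le_max_left _ _) (le_max_right _ _), ?_⟩
    rw [← div_le_iff₀ hc]
    exact le_trans (le_max_right _ _) (le_max_right _ _)
  let T : (E → ℝ) → E → ℝ := fun u x => if x ∈ D then ∫ y, u y ∂κ x + h x else g x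
  let P : (E → ℝ) → Prop := fun u => Measurable u ∧ ∀ y, |u y| ≤ A * φ y
  have hAφ : ∀ y, A * φ y ≤ A * C := fun y => mul_le_mul_of_nonneg_left (hφC y) hA0
  have hPb : ∀ u, P u → ∃ M, ∀ y, |u y| ≤ M := fun u hu =>
    ⟨A * C, fun y => (hu.2 y).trans (hAφ y)⟩
  have hφb : ∃ M, ∀ y, |φ y| ≤ M :=
    ⟨C, fun y => by rw [abs_of_nonneg (by linarith [hφ1 y])]; exact hφC y⟩
  have hφi : ∀ x, Integrable φ (κ x) := fun x => dpp_integrable _ hφ hφb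
  have hPi : ∀ u, P u → ∀ x, Integrable u (κ x) := fun u hu x => dpp_integrable _ hu.1 (hPb u hu)
  have hTP : ∀ u, P u → P (T u) := by
    intro u hu
    refine ⟨Measurable.ite hD ((hm u hu.1 (hPb u hu)).add hh) hg, fun x => ?_⟩
    by_cases hx : x ∈ D
    · simp only [T, if_pos hx]
      have h1 : |∫ y, u y ∂κ x| ≤ A * (φ x - c) := by
        calc |∫ y, u y ∂κ x| ≤ ∫ y, |u y| ∂κ x := abs_integral_le_integral_abs
          _ ≤ ∫ y, A * φ y ∂κ x := integral_mono (hPi u hu x).abs ((hφi x).const_mul A) hu.2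
          _ = A * ∫ y, φ y ∂κ x := integral_const_mul _ _
          _ ≤ _ := mul_le_mul_of_nonneg_left (hL x hx) hA0
      calc _ ≤ |∫ y, u y ∂κ x| + |h x| := abs_add_le _ _
        _ ≤ A * (φ x - c) + A * c := add_le_add h1 ((hH x).trans hAH)
        _ = _ := by ring
    · simp only [T, if_neg hx]
      nlinarith [hG x, hφ1 x]
  have hmono : ∀ u v, P u → P v → (∀ y, u y ≤ v y) → ∀ y, T u y ≤ T v y := by
    intro u v hu hv huv x
    by_cases hx : x ∈ D
    · simp only [T, if_pos hx]
      have := integral_mono (hPi u hu x) (hPi v hv x) huv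
      linarith
    · simp only [T, if_neg hx]; exact le_rfl
  let U : ℕ → E → ℝ := fun n => T^[n] (fun y => -(A * φ y))
  have hUs : ∀ n, U (n + 1) = T (U n) := fun n => Function.iterate_succ_apply' _ _ _
  have hUP : ∀ n, P (U n) := by
    intro n
    induction n with
    | zero =>
      refine ⟨(hφ.const_mul A).neg, fun y => ?_⟩
      simp only [U, Function.iterate_zero, id]
      rw [abs_neg, abs_of_nonneg (mul_nonneg hA0 (by linarith [hφ1 y]))]
    | succ n ih => rw [hUs]; exact hTP _ ih
  have hUm : ∀ n y, U n y ≤ U (n + 1) y := by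
    intro n
    induction n with
    | zero => intro y; exact (abs_le.1 ((hUP 1).2 y)).1
    | succ n ih =>
      rw [hUs, hUs (n + 1)]
      exact hmono _ _ (hUP _) (hUP _) ih
  let u : E → ℝ := fun y => ⨆ n, U n y
  have hlim : ∀ y, Filter.Tendsto (fun n => U n y) Filter.atTop (nhds (u y)) := by
    intro y
    refine tendsto_atTop_ciSup (monotone_nat_of_le_succ fun n => hUm n y) ⟨A * φ y, ?_⟩
    rintro _ ⟨n, rfl⟩
    exact (abs_le.1 ((hUP n).2 y)).2
  have hum : Measurable u :=
    measurable_of_tendsto_metrizable (fun n => (hUP n).1) (tendsto_pi_nhds.2 hlim)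
  have huP : P u := ⟨hum, fun y => le_of_tendsto (hlim y).abs
    (Filter.Eventually.of_forall fun n => (hUP n).2 y)⟩
  have hfix : ∀ x, T u x = u x := by
    intro x
    refine tendsto_nhds_unique ?_ ((Filter.tendsto_add_atTop_iff_nat 1).2 (hlim x))
    simp only [hUs]
    by_cases hx : x ∈ D
    · simp only [T, if_pos hx]
      refine Filter.Tendsto.add_const _ ?_
      exact tendsto_integral_of_dominated_convergence (fun y => A * φ y)
        (fun n => (hUP n).1.aestronglyMeasurable) ((hφi x).const_mul A)
        (fun n => Filter.Eventually.of_forall (hUP n).2) (Filter.Eventually.of_forall hlim)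
    · simp only [T, if_neg hx]; exact tendsto_const_nhds
  refine ⟨u, hum, hPb u huP, fun x hx => ?_, fun x hx => ?_⟩
  · rw [← hfix x]; simp only [T, if_neg hx]
  · conv_lhs => rw [← hfix x]
    simp only [T, if_pos hx]

/-- existence of a bounded Borel solution of the dynamic programming
principle with boundary values `g`. -/
theorem DPP_existence (N : ℕ) (hN : 1 ≤ N) (Λ β ε : ℝ) (hΛ : 1 ≤ Λ)
    (hβ : β ∈ Set.Ioc (0 : ℝ) 1) (hε : 0 < ε)
    (ν : EuclideanSpace ℝ (Fin N) → Measure (EuclideanSpace ℝ (Fin N)))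
    (hprob : ∀ x, IsProbabilityMeasure (ν x))
    (hsupp : ∀ x, ν x (closedBall (0 : EuclideanSpace ℝ (Fin N)) Λ)ᶜ = 0)
    (hsymm : ∀ x (E : Set (EuclideanSpace ℝ (Fin N))), MeasurableSet E → ν x E = ν x (-E))
    (hmeas : ∀ w : EuclideanSpace ℝ (Fin N) → ℝ, Measurable w → (∃ M, ∀ y, |w y| ≤ M) →
      Measurable fun x => ∫ z, w (x + z) ∂ν x)
    (D : Set (EuclideanSpace ℝ (Fin N))) (hD : IsOpen D) (hDc : IsConnected D)
    (hDb : Bornology.IsBounded D)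
    (g f : EuclideanSpace ℝ (Fin N) → ℝ)
    (hg : Measurable g) (hgb : ∃ M, ∀ y, |g y| ≤ M)
    (hf : Measurable f) (hfb : ∃ M, ∀ y, |f y| ≤ M) :
    ∃ u : EuclideanSpace ℝ (Fin N) → ℝ,
      Measurable u ∧ (∃ M, ∀ y, |u y| ≤ M) ∧
      (∀ x ∉ D, u x = g x) ∧
      (∀ x ∈ D, u x = (1 - β) * ∫ z, u (x + ε • z) ∂ν x +
        β * ⨍ y in ball x ε, u y + ε ^ 2 * f x) := by
  obtain ⟨hβ0, hβ1⟩ := hβ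
  let i : Fin N := ⟨0, hN⟩
  -- the uniform measure on the ball
  let m : (EuclideanSpace ℝ (Fin N)) → Measure (EuclideanSpace ℝ (Fin N)) := fun x =>
    (volume.restrict (ball x ε) Set.univ)⁻¹ • volume.restrict (ball x ε)
  have hvol : ∀ x : (EuclideanSpace ℝ (Fin N)), volume (ball x ε) = volume (ball (0 : (EuclideanSpace ℝ (Fin N))) ε) := fun x =>
    Measure.addHaar_ball_center _ _ _
  have hvpos : ∀ r, 0 < r → 0 < volume (ball (0 : (EuclideanSpace ℝ (Fin N))) r) := fun r hr => measure_ball_pos _ _ hr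
  have hvfin : ∀ r, volume (ball (0 : (EuclideanSpace ℝ (Fin N))) r) ≠ ⊤ := fun r => measure_ball_lt_top.ne
  have hmprob : ∀ x, IsProbabilityMeasure (m x) := by
    intro x
    refine ⟨?_⟩
    simp only [m, Measure.smul_apply, smul_eq_mul]
    rw [Measure.restrict_apply_univ, hvol]
    exact ENNReal.inv_mul_cancel (hvpos ε hε).ne' (hvfin ε)
  have hav : ∀ x (w : (EuclideanSpace ℝ (Fin N)) → ℝ), ⨍ y in ball x ε, w y = ∫ y, w y ∂m x := fun x w => rfl
  have hmint : ∀ x (w : (EuclideanSpace ℝ (Fin N)) → ℝ),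
      ∫ y, w y ∂m x = (volume.real (ball (0 : (EuclideanSpace ℝ (Fin N))) ε))⁻¹ * ∫ y in ball x ε, w y := by
    intro x w
    simp only [m]
    rw [integral_smul_measure, Measure.restrict_apply_univ, hvol]
    simp [Measure.real]
  let n : (EuclideanSpace ℝ (Fin N)) → Measure (EuclideanSpace ℝ (Fin N)) := fun x => (ν x).map (fun z => x + ε • z)
  have hnmeas : ∀ x : (EuclideanSpace ℝ (Fin N)), Measurable (fun z : (EuclideanSpace ℝ (Fin N)) => x + ε • z) := fun x => by fun_prop
  have hnprob : ∀ x, IsProbabilityMeasure (n x) := fun x =>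
    Measure.isProbabilityMeasure_map (hnmeas x).aemeasurable
  have hnint : ∀ x (w : (EuclideanSpace ℝ (Fin N)) → ℝ), Measurable w → ∫ y, w y ∂n x = ∫ z, w (x + ε • z) ∂ν x := by
    intro x w hw
    exact integral_map (hnmeas x).aemeasurable hw.aestronglyMeasurable
  let κ : (EuclideanSpace ℝ (Fin N)) → Measure (EuclideanSpace ℝ (Fin N)) := fun x => ENNReal.ofReal (1 - β) • n x + ENNReal.ofReal β • m x
  have hκprob : ∀ x, IsProbabilityMeasure (κ x) := by
    intro x
    refine ⟨?_⟩
    simp only [κ, Measure.add_apply, Measure.smul_apply, smul_eq_mul, measure_univ, mul_one]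
    rw [← ENNReal.ofReal_add (by linarith) hβ0.le]
    simp
  have hκint : ∀ x (w : (EuclideanSpace ℝ (Fin N)) → ℝ), Measurable w → (∃ M, ∀ y, |w y| ≤ M) →
      ∫ y, w y ∂κ x = (1 - β) * ∫ y, w y ∂n x + β * ∫ y, w y ∂m x := by
    intro x w hw hb
    simp only [κ]
    rw [integral_add_measure ((dpp_integrable (n x) hw hb).smul_measure ENNReal.ofReal_ne_top)
      ((dpp_integrable (m x) hw hb).smul_measure ENNReal.ofReal_ne_top),
      integral_smul_measure, integral_smul_measure, ENNReal.toReal_ofReal (by linarith),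
      ENNReal.toReal_ofReal hβ0.le]
    rfl
  -- measurability
  have hm1 : ∀ w : (EuclideanSpace ℝ (Fin N)) → ℝ, Measurable w → Measurable fun x => ∫ y, w y ∂n x := by
    intro w hw
    let μ : (EuclideanSpace ℝ (Fin N)) → Measure (EuclideanSpace ℝ (Fin N)) := fun x => (ν x).map (fun z => x + z)
    have hμm : Measurable μ := by
      refine Measure.measurable_of_measurable_coe _ fun s hs => ?_
      have h1 := hmeas (s.indicator 1) (measurable_one.indicator hs) ⟨1, fun y => by
        by_cases hy : y ∈ s <;> simp [hy]⟩
      have h2 : (fun x => μ x s) = fun x => ENNReal.ofReal (∫ z, s.indicator 1 (x + z) ∂ν x) := by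
        funext x
        have h3 : ∫ z, s.indicator (1 : (EuclideanSpace ℝ (Fin N)) → ℝ) (x + z) ∂ν x = ∫ y, s.indicator 1 y ∂μ x :=
          (integral_map (by fun_prop)
            (measurable_one.indicator hs).aestronglyMeasurable).symm
        have : IsProbabilityMeasure (μ x) := Measure.isProbabilityMeasure_map (by fun_prop)
        rw [h3, integral_indicator_one hs]
        simp [Measure.real]
      rw [h2]
      exact h1.ennreal_ofReal
    let K : ProbabilityTheory.Kernel (EuclideanSpace ℝ (Fin N)) (EuclideanSpace ℝ (Fin N)) := ⟨μ, hμm⟩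
    have hKm : ProbabilityTheory.IsMarkovKernel K :=
      ⟨fun x => Measure.isProbabilityMeasure_map (by fun_prop)⟩
    have h4 : StronglyMeasurable fun x => ∫ y, w (x + ε • (y - x)) ∂K x := by
      have : StronglyMeasurable (Function.uncurry fun (x y : (EuclideanSpace ℝ (Fin N))) => w (x + ε • (y - x))) := by
        apply Measurable.stronglyMeasurable
        exact hw.comp (by fun_prop)
      exact this.integral_kernel_prod_right
    convert h4.measurable using 2 with x
    rw [hnint x w hw]
    change _ = ∫ y, w (x + ε • (y - x)) ∂((ν x).map (fun z => x + z))
    rw [integral_map (by fun_prop) (by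
      apply Measurable.aestronglyMeasurable
      exact hw.comp (by fun_prop))]
    simp
  have hm2 : ∀ w : (EuclideanSpace ℝ (Fin N)) → ℝ, Measurable w → Measurable fun x => ∫ y, w y ∂m x := by
    intro w hw
    simp only [hmint]
    refine Measurable.const_mul ?_ _
    have h5 : StronglyMeasurable fun x : (EuclideanSpace ℝ (Fin N)) => ∫ y, (ball x ε).indicator w y := by
      have : StronglyMeasurable (Function.uncurry fun (x y : (EuclideanSpace ℝ (Fin N))) => (ball x ε).indicator w y) := by
        apply Measurable.stronglyMeasurable
        have hs : MeasurableSet {p : (EuclideanSpace ℝ (Fin N)) × (EuclideanSpace ℝ (Fin N)) | dist p.2 p.1 < ε} :=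
          measurableSet_lt (by fun_prop) measurable_const
        exact (hw.comp measurable_snd).indicator hs
      exact this.integral_prod_right
    simpa only [integral_indicator measurableSet_ball] using h5.measurable
  -- the barrier
  obtain ⟨R0, hR0⟩ := hDb.exists_norm_le
  have hcoord : ∀ y : (EuclideanSpace ℝ (Fin N)), |y i| ≤ ‖y‖ := fun y => PiLp.norm_apply_le y i
  obtain ⟨q, hq0, hq⟩ : ∃ q : ℝ, 0 < q ∧ ∀ x, q ≤ (m x).real {y : (EuclideanSpace ℝ (Fin N)) | x i + ε / 2 ≤ y i} := by
    refine ⟨(volume.real (ball (0 : (EuclideanSpace ℝ (Fin N))) ε))⁻¹ * volume.real (ball (0 : (EuclideanSpace ℝ (Fin N))) (ε / 4)),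
      mul_pos (inv_pos.2 (ENNReal.toReal_pos (hvpos ε hε).ne' (hvfin ε)))
        (ENNReal.toReal_pos (hvpos _ (by positivity)).ne' (hvfin _)), fun x => ?_⟩
    let e : (EuclideanSpace ℝ (Fin N)) := EuclideanSpace.single i (3 * ε / 4)
    have he : ‖e‖ = 3 * ε / 4 := by
      simp only [e, PiLp.norm_single, Real.norm_eq_abs]
      exact abs_of_pos (by positivity)
    have hei : e i = 3 * ε / 4 := by simp [e]
    have hsub : ball (x + e) (ε / 4) ⊆ {y : (EuclideanSpace ℝ (Fin N)) | x i + ε / 2 ≤ y i} ∩ ball x ε := by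
      intro y hy
      rw [mem_ball, dist_eq_norm] at hy
      constructor
      · have := (hcoord (y - (x + e))).trans hy.le
        simp only [PiLp.sub_apply, PiLp.add_apply, hei] at this
        have := (abs_le.1 this).1
        simp only [Set.mem_ofPred_eq]; linarith
      · rw [mem_ball, dist_eq_norm]
        have : y - x = (y - (x + e)) + e := by abel
        rw [this]
        have := norm_add_le (y - (x + e)) e
        linarith
    have hms : MeasurableSet {y : (EuclideanSpace ℝ (Fin N)) | x i + ε / 2 ≤ y i} :=
      measurableSet_le measurable_const (by fun_prop)
    have h6 : (m x).real {y : (EuclideanSpace ℝ (Fin N)) | x i + ε / 2 ≤ y i} = (volume.real (ball (0 : (EuclideanSpace ℝ (Fin N))) ε))⁻¹ *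
        volume.real ({y : (EuclideanSpace ℝ (Fin N)) | x i + ε / 2 ≤ y i} ∩ ball x ε) := by
      simp only [m, Measure.real, Measure.smul_apply, smul_eq_mul]
      rw [Measure.restrict_apply_univ, hvol, Measure.restrict_apply hms]
      simp
    rw [h6]
    refine mul_le_mul_of_nonneg_left ?_ (by positivity)
    have h7 : volume.real (ball (0 : (EuclideanSpace ℝ (Fin N))) (ε / 4)) = volume.real (ball (x + e) (ε / 4)) := by
      simp only [Measure.real]
      rw [Measure.addHaar_ball_center volume (x + e)]
    rw [h7]
    exact measureReal_mono hsub
      (ne_top_of_le_ne_top measure_ball_lt_top.ne (measure_mono Set.inter_subset_right))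
  obtain ⟨l, hl0, hl⟩ : ∃ l : ℝ, 0 ≤ l ∧ 2 ≤ β * (q * Real.exp (l * (ε / 2))) := by
    refine ⟨(2 / (β * q)) / (ε / 2), by positivity, ?_⟩
    rw [div_mul_cancel₀ _ (by positivity)]
    have := Real.add_one_le_exp (2 / (β * q))
    have h8 : 2 = β * q * (2 / (β * q)) := by field_simp
    calc (2 : ℝ) = β * q * (2 / (β * q)) := h8
      _ ≤ β * q * Real.exp (2 / (β * q)) :=
        mul_le_mul_of_nonneg_left (by linarith) (by positivity)
      _ = _ := by ring
  let R : ℝ := R0 + ε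
  let ψ : (EuclideanSpace ℝ (Fin N)) → ℝ := fun y => Real.exp (l * min (y i) R)
  have hψm : Measurable ψ := by fun_prop
  have hψ0 : ∀ y, 0 < ψ y := fun y => Real.exp_pos _
  have hψ1 : ∀ y, ψ y ≤ Real.exp (l * R) := fun y =>
    Real.exp_le_exp.2 (mul_le_mul_of_nonneg_left (min_le_right _ _) hl0)
  have hψb : ∃ M, ∀ y, |ψ y| ≤ M := ⟨_, fun y => by rw [abs_of_pos (hψ0 y)]; exact hψ1 y⟩
  have hψL : ∀ x ∈ D, 2 * ψ x ≤ ∫ y, ψ y ∂κ x := by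
    intro x hx
    have hxi : |x i| ≤ R0 := (hcoord x).trans (hR0 x hx)
    have hxi' := (abs_le.1 hxi).2
    rw [hκint x ψ hψm hψb]
    have h9 : 0 ≤ ∫ y, ψ y ∂n x := integral_nonneg fun y => (hψ0 y).le
    have hψx : ψ x = Real.exp (l * x i) := by
      simp only [ψ]
      rw [min_eq_left (by simp only [R]; linarith)]
    have hms : MeasurableSet {y : (EuclideanSpace ℝ (Fin N)) | x i + ε / 2 ≤ y i} :=
      measurableSet_le measurable_const (by fun_prop)
    have h10 : q * Real.exp (l * (ε / 2)) * ψ x ≤ ∫ y, ψ y ∂m x := by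
      have h11 : ∫ y, {y : (EuclideanSpace ℝ (Fin N)) | x i + ε / 2 ≤ y i}.indicator
          (fun _ => Real.exp (l * (x i + ε / 2))) y ∂m x ≤ ∫ y, ψ y ∂m x := by
        refine integral_mono ((integrable_const _).indicator hms)
          (dpp_integrable _ hψm hψb) fun y => ?_
        refine Set.indicator_le' (fun y hy => ?_) (fun y _ => (hψ0 y).le) y
        refine Real.exp_le_exp.2 (mul_le_mul_of_nonneg_left (le_min hy ?_) hl0)
        simp only [R]; linarith
      rw [integral_indicator_const _ hms, smul_eq_mul] at h11
      refine le_trans ?_ h11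
      rw [hψx, mul_assoc, ← Real.exp_add, show l * (ε / 2) + l * x i = l * (x i + ε / 2) by ring]
      exact mul_le_mul_of_nonneg_right (hq x) (Real.exp_pos _).le
    have h12 : 2 * ψ x ≤ β * ∫ y, ψ y ∂m x := by
      calc 2 * ψ x ≤ β * (q * Real.exp (l * (ε / 2))) * ψ x :=
            mul_le_mul_of_nonneg_right hl (hψ0 x).le
        _ = β * (q * Real.exp (l * (ε / 2)) * ψ x) := by ring
        _ ≤ _ := mul_le_mul_of_nonneg_left h10 hβ0.le
    have h13 : 0 ≤ (1 - β) * ∫ y, ψ y ∂n x := mul_nonneg (by linarith) h9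
    linarith
  obtain ⟨F, hF⟩ := hfb
  obtain ⟨u, hu, hub, hug, huD⟩ := dpp_abstract κ
    (fun w hw hb => by
      simp only [hκint _ w hw hb]
      exact ((hm1 w hw).const_mul _).add ((hm2 w hw).const_mul _))
    D hD.measurableSet (fun y => Real.exp (l * R) + 1 - ψ y) (measurable_const.sub hψm)
    (fun y => by linarith [hψ1 y]) (Real.exp (l * R) + 1) (Real.exp (l * (-R0)))
    (fun y => by linarith [hψ0 y]) (Real.exp_pos _)
    (fun x hx => by
      rw [integral_sub (integrable_const _) (dpp_integrable _ hψm hψb)]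
      have h14 := hψL x hx
      have hxi : |x i| ≤ R0 := (hcoord x).trans (hR0 x hx)
      have h15 : Real.exp (l * (-R0)) ≤ ψ x := by
        refine Real.exp_le_exp.2 (mul_le_mul_of_nonneg_left (le_min (abs_le.1 hxi).1 ?_) hl0)
        simp only [R]
        linarith [abs_nonneg (x i)]
      simp only [integral_const, probReal_univ, one_smul]
      linarith)
    g (fun x => β * (ε ^ 2 * f x)) hg hgb ((hf.const_mul _).const_mul _)
    ⟨β * (ε ^ 2 * F), fun y => by
      rw [abs_mul, abs_mul, abs_of_pos hβ0, abs_of_pos (by positivity : 0 < ε ^ 2)]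
      exact mul_le_mul_of_nonneg_left (mul_le_mul_of_nonneg_left (hF y) (by positivity)) hβ0.le⟩
  refine ⟨u, hu, hub, hug, fun x hx => ?_⟩
  have h16 : ⨍ y in ball x ε, (u y + ε ^ 2 * f x) = ∫ y, u y ∂m x + ε ^ 2 * f x := by
    rw [hav x (fun y => u y + ε ^ 2 * f x),
      integral_add (dpp_integrable _ hu hub) (integrable_const _)]
    simp
  rw [h16, ← hnint x u hu, huD x hx, hκint x u hu hub]
  ring
end
end

section
/- Let Ω ⊂ ℝ^N be a bounded domain and f : Ω → ℝ a bounded Borel measurable function. If u, v : ℝ^N → ℝ are bounded Borel measurable functions which agree on ℝ^N ∖ Ω and each w ∈ {u, v} satisfies the dynamic programming principle w(x) = α ∫ w(x+εz) dν_x(z) + β ⨍_{B_ε(x)} w(y) dy + ε² f(x) for every x ∈ Ω, then u = v on ℝ^N. -/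
open MeasureTheory Metric

noncomputable section


theorem aux_sym {E : Type*} [NormedAddCommGroup E] [InnerProductSpace ℝ E] [MeasurableSpace E]
    [BorelSpace E] [FiniteDimensional ℝ E] (μ : Measure E) [IsProbabilityMeasure μ]
    [μ.IsNegInvariant] (r t δ S M : ℝ) (hr : ∀ᵐ z ∂μ, ‖z‖ ≤ r) (ht : 0 < t)
    (g : E → ℝ) (hg : Measurable g) (hM : ∀ y, |g y| ≤ M) (x : E)
    (hS : ∀ y, ‖y - x‖ ≤ t * r → g y + δ * ‖y‖ ^ 2 ≤ S) :
    (∫ z, g (x + t • z) ∂μ) + δ * (‖x‖ ^ 2 + t ^ 2 * ∫ z, ‖z‖ ^ 2 ∂μ) ≤ S := by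
  have hgi : Integrable (fun z => g (x + t • z)) μ :=
    Integrable.of_bound (by exact (hg.comp (by fun_prop)).aestronglyMeasurable) M (Filter.Eventually.of_forall fun z => hM _)
  have hin : Integrable (fun z : E => inner ℝ x z) μ := by
    refine Integrable.of_bound (by fun_prop) (‖x‖ * r) ?_
    filter_upwards [hr] with z hz
    exact (norm_inner_le_norm x z).trans (by gcongr)
  have hsq : Integrable (fun z : E => ‖z‖ ^ 2) μ := by
    refine Integrable.of_bound (by fun_prop) (r ^ 2) ?_
    filter_upwards [hr] with z hz
    rw [Real.norm_of_nonneg (by positivity)]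
    gcongr
  have h0 : ∫ z, inner ℝ x z ∂μ = 0 := by
    have := integral_neg_eq_self (fun z : E => (inner ℝ x z : ℝ)) μ
    simp only [inner_neg_right, integral_neg] at this
    linarith
  have hle : ∫ z, (g (x + t • z) + (δ * ‖x‖ ^ 2 + (2 * δ * t * inner ℝ x z + δ * t ^ 2 * ‖z‖ ^ 2))) ∂μ
      ≤ ∫ z, S ∂μ := by
    refine integral_mono_ae ?_ (integrable_const _) ?_
    · exact hgi.add ((integrable_const _).add ((hin.const_mul _).add (hsq.const_mul _)))
    · filter_upwards [hr] with z hz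
      have := hS (x + t • z) (by
        rw [add_sub_cancel_left, norm_smul, Real.norm_of_nonneg ht.le]; gcongr)
      rw [norm_add_sq_real, norm_smul, Real.norm_of_nonneg ht.le, inner_smul_right] at this
      show _ ≤ S
      linarith
  have k1 : Integrable (fun z => 2 * δ * t * inner ℝ x z + δ * t ^ 2 * ‖z‖ ^ 2) μ :=
    (hin.const_mul _).add (hsq.const_mul _)
  have k2 : Integrable
      (fun z => δ * ‖x‖ ^ 2 + (2 * δ * t * inner ℝ x z + δ * t ^ 2 * ‖z‖ ^ 2)) μ :=
    (integrable_const _).add k1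
  rw [integral_add hgi k2, integral_add (integrable_const _) k1,
    integral_add (hin.const_mul _) (hsq.const_mul _), integral_const_mul, integral_const_mul,
    h0] at hle
  simp [integral_const_mul] at hle
  linarith

theorem aux_avg {E : Type*} [NormedAddCommGroup E] [InnerProductSpace ℝ E] [MeasurableSpace E]
    [BorelSpace E] [FiniteDimensional ℝ E] (ε : ℝ) (g : E → ℝ) (x : E) :
    ⨍ y in ball x ε, g y = ∫ z, g (x + (1 : ℝ) • z) ∂(ProbabilityTheory.cond volume (ball (0 : E) ε)) := by
  rw [setAverage_eq, ProbabilityTheory.cond, integral_smul_measure]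
  have h1 : (volume : Measure E).real (ball x ε) = (volume : Measure E).real (ball 0 ε) := by
    simp [measureReal_def, Measure.addHaar_ball_center]
  rw [h1, ENNReal.toReal_inv, measureReal_def]
  congr 1
  rw [← integral_indicator measurableSet_ball, ← integral_indicator measurableSet_ball,
    ← integral_add_left_eq_self _ x]
  congr 1
  ext z
  simp [Set.indicator, dist_eq_norm]

theorem aux_max (N : ℕ) (hN : 1 ≤ N) (Λ β ε : ℝ) (hΛ : 1 ≤ Λ)
    (hβ : β ∈ Set.Ioc (0 : ℝ) 1) (hε : 0 < ε)
    (ν : EuclideanSpace ℝ (Fin N) → Measure (EuclideanSpace ℝ (Fin N)))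
    (hprob : ∀ x, IsProbabilityMeasure (ν x))
    (hsupp : ∀ x, ν x (closedBall (0 : EuclideanSpace ℝ (Fin N)) Λ)ᶜ = 0)
    (hsymm : ∀ x (E : Set (EuclideanSpace ℝ (Fin N))), MeasurableSet E → ν x E = ν x (-E))
    (D : Set (EuclideanSpace ℝ (Fin N)))
    (hDb : Bornology.IsBounded D)
    (w : EuclideanSpace ℝ (Fin N) → ℝ)
    (hw : Measurable w) (M : ℝ) (hM : ∀ y, |w y| ≤ M)
    (h0 : ∀ x ∉ D, w x = 0)
    (hDPP : ∀ x ∈ D, w x = (1 - β) * ∫ z, w (x + ε • z) ∂ν x +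
      β * ⨍ y in ball x ε, w y) :
    ∀ x, w x ≤ 0 := by
  obtain ⟨hβ0, hβ1⟩ := hβ
  obtain ⟨R₀, hR₀⟩ := hDb.exists_norm_le
  set R : ℝ := |R₀| + ε * Λ with hR
  have hεΛ : ε ≤ ε * Λ := by nlinarith
  have hRpos : 0 ≤ R := by positivity
  set μ := ProbabilityTheory.cond volume (ball (0 : EuclideanSpace ℝ (Fin N)) ε) with hμ
  have hvol : (volume : Measure (EuclideanSpace ℝ (Fin N))) (ball 0 ε) ≠ 0 :=
    (measure_ball_pos _ _ hε).ne'
  have hprobμ : IsProbabilityMeasure μ :=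
    ProbabilityTheory.cond_isProbabilityMeasure_of_finite hvol measure_ball_lt_top.ne
  have hμae : ∀ᵐ z ∂μ, z ∈ ball (0 : EuclideanSpace ℝ (Fin N)) ε :=
    ProbabilityTheory.ae_cond_mem measurableSet_ball
  have hμsymm : μ.IsNegInvariant := by
    constructor
    ext s hs
    rw [Measure.neg_apply, hμ, ProbabilityTheory.cond_apply measurableSet_ball,
      ProbabilityTheory.cond_apply measurableSet_ball, ← Measure.measure_neg volume (ball 0 ε ∩ s),
      Set.inter_neg]
    simp
  have hνsymm : ∀ x, (ν x).IsNegInvariant := by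
    intro x
    constructor
    ext s hs
    rw [Measure.neg_apply, ← hsymm x s hs]
  have hνae : ∀ x, ∀ᵐ z ∂ν x, ‖z‖ ≤ Λ := by
    intro x
    rw [ae_iff]
    convert hsupp x using 2
    ext z
    simp
  have hμae' : ∀ᵐ z ∂μ, ‖z‖ ≤ ε := by
    filter_upwards [hμae] with z hz
    simpa using (mem_ball_zero_iff.1 hz).le
  set c : ℝ := ∫ z, ‖z‖ ^ 2 ∂μ with hc
  have hcpos : 0 < c := by
    have : Nonempty (Fin N) := ⟨⟨0, hN⟩⟩
    have hsq : Integrable (fun z : EuclideanSpace ℝ (Fin N) => ‖z‖ ^ 2) μ := by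
      refine Integrable.of_bound (by fun_prop) (ε ^ 2) ?_
      filter_upwards [hμae'] with z hz
      rw [Real.norm_of_nonneg (by positivity)]
      gcongr
    rw [hc, integral_pos_iff_support_of_nonneg (fun z => by positivity) hsq]
    have hs : Function.support (fun z : EuclideanSpace ℝ (Fin N) => ‖z‖ ^ 2) = {0}ᶜ := by
      ext z; simp
    have hz : μ {0} = 0 :=
      ProbabilityTheory.cond_absolutelyContinuous (measure_singleton _)
    rw [hs, prob_compl_eq_one_sub (measurableSet_singleton _), hz]
    simp
  have key : ∀ δ : ℝ, 0 < δ → ∀ x ∈ D, w x ≤ δ * R ^ 2 := by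
    intro δ hδ
    set A := (fun y => w y + δ * ‖y‖ ^ 2) '' closedBall 0 R with hA
    have hbdd : BddAbove A := by
      refine ⟨M + δ * R ^ 2, ?_⟩
      rintro _ ⟨y, hy, rfl⟩
      have hy' : ‖y‖ ≤ R := by simpa using hy
      have := (abs_le.1 (hM y)).2
      have : ‖y‖ ^ 2 ≤ R ^ 2 := by gcongr
      show w y + δ * ‖y‖ ^ 2 ≤ _
      nlinarith
    have hne : A.Nonempty := ⟨_, 0, by simpa using hRpos, rfl⟩
    set S := sSup A with hSdef
    have hle : ∀ y, ‖y‖ ≤ R → w y + δ * ‖y‖ ^ 2 ≤ S := fun y hy =>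
      le_csSup hbdd ⟨y, by simpa using hy, rfl⟩
    have hDle : ∀ x ∈ D, ‖x‖ ≤ |R₀| := fun x hx => (hR₀ x hx).trans (le_abs_self _)
    have hstep : ∀ x ∈ D, w x + δ * ‖x‖ ^ 2 ≤ S - β * δ * c := by
      intro x hx
      have hnear : ∀ y, ‖y - x‖ ≤ ε * Λ → w y + δ * ‖y‖ ^ 2 ≤ S := by
        intro y hy
        apply hle
        have h1 : ‖y‖ ≤ ‖x‖ + ‖y - x‖ := by
          simpa using norm_add_le x (y - x)
        have := hDle x hx
        linarith
      have i1 := aux_sym (ν x) Λ ε δ S M (hνae x) hε w hw hM x hnear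
      have i2 := aux_sym μ ε 1 δ S M hμae' one_pos w hw hM x
        (fun y hy => hnear y (by linarith))
      have e := hDPP x hx
      rw [aux_avg] at e
      have hn : 0 ≤ ∫ z, ‖z‖ ^ 2 ∂ν x := integral_nonneg fun z => by positivity
      have hn' : 0 ≤ δ * (ε ^ 2 * ∫ z, ‖z‖ ^ 2 ∂ν x) := by positivity
      have j1 : (1 - β) * ((∫ z, w (x + ε • z) ∂ν x) + δ * ‖x‖ ^ 2) ≤ (1 - β) * S :=
        mul_le_mul_of_nonneg_left (by linarith) (by linarith)
      have j2 := mul_le_mul_of_nonneg_left i2 hβ0.le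
      rw [e]
      rw [← hc] at j2
      linarith
    have hS : S ≤ δ * R ^ 2 := by
      by_contra! hcon
      have hpos : 0 < β * δ * c := by positivity
      obtain ⟨_, ⟨y, hy, rfl⟩, hlt⟩ := exists_lt_of_lt_csSup hne
        (show max (S - β * δ * c) (δ * R ^ 2) < sSup A from max_lt (by linarith) hcon)
      have hlt1 := (le_max_left _ _).trans_lt hlt
      have hlt2 := (le_max_right _ _).trans_lt hlt
      by_cases hyD : y ∈ D
      · have := hstep y hyD
        simp only at hlt1
        linarith
      · have hy' : ‖y‖ ≤ R := by simpa using hy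
        have : δ * ‖y‖ ^ 2 ≤ δ * R ^ 2 := by gcongr
        simp only [h0 y hyD] at hlt2
        linarith
    intro x hx
    have h1 := hle x ((hDle x hx).trans (by rw [hR]; nlinarith))
    have : 0 ≤ δ * ‖x‖ ^ 2 := by positivity
    linarith
  intro x
  by_cases hx : x ∈ D
  · by_contra! hcon
    have hp : 0 < R ^ 2 + 1 := by positivity
    have := key (w x / (R ^ 2 + 1)) (by positivity) x hx
    rw [div_mul_eq_mul_div, le_div_iff₀ hp] at this
    nlinarith
  · exact (h0 x hx).le

theorem aux_diff {E : Type*} [NormedAddCommGroup E] [InnerProductSpace ℝ E] [MeasurableSpace E]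
    [BorelSpace E] [FiniteDimensional ℝ E] (m : Measure E) [IsProbabilityMeasure m] (β ε k : ℝ)
    (hε : 0 < ε) (x : E)
    (u v : E → ℝ)
    (hu : Measurable u) (hub : ∃ M, ∀ y, |u y| ≤ M)
    (hv : Measurable v) (hvb : ∃ M, ∀ y, |v y| ≤ M)
    (e1 : u x = (1 - β) * ∫ z, u (x + ε • z) ∂m + β * ⨍ y in ball x ε, u y + k)
    (e2 : v x = (1 - β) * ∫ z, v (x + ε • z) ∂m + β * ⨍ y in ball x ε, v y + k) :
    u x - v x = (1 - β) * ∫ z, (u (x + ε • z) - v (x + ε • z)) ∂m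
      + β * ⨍ y in ball x ε, (u y - v y) := by
  obtain ⟨M, hM⟩ := hub
  obtain ⟨M', hM'⟩ := hvb
  have hprobμ : IsProbabilityMeasure (ProbabilityTheory.cond volume (ball (0 : E) ε)) :=
    ProbabilityTheory.cond_isProbabilityMeasure_of_finite (measure_ball_pos _ _ hε).ne'
      measure_ball_lt_top.ne
  have I : ∀ (g : E → ℝ) (hg : Measurable g) (C : ℝ) (hC : ∀ y, |g y| ≤ C) (μ : Measure E)
      [IsProbabilityMeasure μ] (t : ℝ), Integrable (fun z => g (x + t • z)) μ := by
    intro g hg C hC μ _ t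
    exact Integrable.of_bound (by exact (hg.comp (by fun_prop)).aestronglyMeasurable) C (Filter.Eventually.of_forall fun z => hC _)
  rw [aux_avg, integral_add (I u hu M hM _ 1) (integrable_const _)] at e1
  rw [aux_avg, integral_add (I v hv M' hM' _ 1) (integrable_const _)] at e2
  rw [aux_avg, integral_sub (I u hu M hM _ _) (I v hv M' hM' _ _),
    integral_sub (I u hu M hM _ _) (I v hv M' hM' _ _), e1, e2]
  ring

/-- uniqueness of bounded Borel solutions of the dynamic programming
principle with given boundary values. -/
theorem DPP_uniqueness (N : ℕ) (hN : 1 ≤ N) (Λ β ε : ℝ) (hΛ : 1 ≤ Λ)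
    (hβ : β ∈ Set.Ioc (0 : ℝ) 1) (hε : 0 < ε)
    (ν : EuclideanSpace ℝ (Fin N) → Measure (EuclideanSpace ℝ (Fin N)))
    (hprob : ∀ x, IsProbabilityMeasure (ν x))
    (hsupp : ∀ x, ν x (closedBall (0 : EuclideanSpace ℝ (Fin N)) Λ)ᶜ = 0)
    (hsymm : ∀ x (E : Set (EuclideanSpace ℝ (Fin N))), MeasurableSet E → ν x E = ν x (-E))
    (hmeas : ∀ w : EuclideanSpace ℝ (Fin N) → ℝ, Measurable w → (∃ M, ∀ y, |w y| ≤ M) →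
      Measurable fun x => ∫ z, w (x + z) ∂ν x)
    (D : Set (EuclideanSpace ℝ (Fin N))) (hD : IsOpen D) (hDc : IsConnected D)
    (hDb : Bornology.IsBounded D)
    (f u v : EuclideanSpace ℝ (Fin N) → ℝ)
    (hf : Measurable f) (hfb : ∃ M, ∀ y, |f y| ≤ M)
    (hu : Measurable u) (hub : ∃ M, ∀ y, |u y| ≤ M)
    (hv : Measurable v) (hvb : ∃ M, ∀ y, |v y| ≤ M)
    (hagree : ∀ x ∉ D, u x = v x)
    (hDPPu : ∀ x ∈ D, u x = (1 - β) * ∫ z, u (x + ε • z) ∂ν x +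
      β * ⨍ y in ball x ε, u y + ε ^ 2 * f x)
    (hDPPv : ∀ x ∈ D, v x = (1 - β) * ∫ z, v (x + ε • z) ∂ν x +
      β * ⨍ y in ball x ε, v y + ε ^ 2 * f x) :
    ∀ x, u x = v x := by
  obtain ⟨M, hM⟩ := hub
  obtain ⟨M', hM'⟩ := hvb
  intro x
  have a := aux_max N hN Λ β ε hΛ hβ hε ν hprob hsupp hsymm D hDb (fun y => u y - v y)
    (hu.sub hv) (M + M') (fun y => (abs_sub _ _).trans (add_le_add (hM y) (hM' y)))
    (fun y hy => by simp [hagree y hy])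
    (fun y hy => aux_diff (ν y) β ε _ hε y u v hu ⟨M, hM⟩ hv ⟨M', hM'⟩ (hDPPu y hy) (hDPPv y hy)) x
  have b := aux_max N hN Λ β ε hΛ hβ hε ν hprob hsupp hsymm D hDb (fun y => v y - u y)
    (hv.sub hu) (M' + M) (fun y => (abs_sub _ _).trans (add_le_add (hM' y) (hM y)))
    (fun y hy => by simp [hagree y hy])
    (fun y hy => aux_diff (ν y) β ε _ hε y v u hv ⟨M', hM'⟩ hu ⟨M, hM⟩ (hDPPv y hy) (hDPPu y hy)) x
  linarith
end
end

section
/- Let Ω ⊂ ℝ^N be a bounded domain and let u : ℝ^N → ℝ be a bounded function with u ≤ 0 on ℝ^N ∖ Ω. Then sup_Ω u ≤ (diam Ω + Λε) ( |∇Γ(K_u)| / |B_1| )^{1/N}, where |·| denotes N-dimensional Lebesgue measure, Γ is the concave envelope of u⁺ in Ω̃_{Λε}, K_u is the contact set, and ∇Γ(K_u) is the union of the superdifferentials of Γ over the points of K_u. -/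
open MeasureTheory Metric
open scoped ENNReal RealInnerProductSpace

noncomputable section

/-- The extended domain `Ω̃_{Λε} = {x : dist(x,Ω) < Λε}`. -/
def tildeOmega (N : ℕ) (Λ ε : ℝ) (D : Set (EuclideanSpace ℝ (Fin N))) :
    Set (EuclideanSpace ℝ (Fin N)) :=
  {x | infDist x D < Λ * ε}

/-- `u⁺ = max{u, sup_{ℝᴺ∖Ω} u}`. -/
def uPlus (N : ℕ) (D : Set (EuclideanSpace ℝ (Fin N)))
    (u : EuclideanSpace ℝ (Fin N) → ℝ) : EuclideanSpace ℝ (Fin N) → ℝ :=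
  fun x => max (u x) (sSup (u '' Dᶜ))

open Classical in
/-- The concave envelope of `u⁺` in `Ω̃_{Λε}`, extended by `sup_{ℝᴺ∖Ω} u` outside. -/
def concaveEnvelope (N : ℕ) (Λ ε : ℝ) (D : Set (EuclideanSpace ℝ (Fin N)))
    (u : EuclideanSpace ℝ (Fin N) → ℝ) : EuclideanSpace ℝ (Fin N) → ℝ :=
  fun x =>
    if x ∈ tildeOmega N Λ ε D then
      sInf {v : ℝ | ∃ (ξ : EuclideanSpace ℝ (Fin N)) (c : ℝ),
        (∀ y ∈ tildeOmega N Λ ε D, uPlus N D u y ≤ (inner ℝ ξ y : ℝ) + c) ∧ v = (inner ℝ ξ x : ℝ) + c}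
    else sSup (u '' Dᶜ)

/-- The contact set `K_u`. -/
def contactSet (N : ℕ) (Λ ε : ℝ) (D : Set (EuclideanSpace ℝ (Fin N)))
    (u : EuclideanSpace ℝ (Fin N) → ℝ) : Set (EuclideanSpace ℝ (Fin N)) :=
  {x ∈ closure D |
    Filter.limsup (uPlus N D u) (nhds x) = concaveEnvelope N Λ ε D u x}

/-- The superdifferential of `Γ` at `x` (relative to `Ω̃_{Λε}`). -/
def superDiff (N : ℕ) (tΩ : Set (EuclideanSpace ℝ (Fin N)))
    (Γ : EuclideanSpace ℝ (Fin N) → ℝ) (x : EuclideanSpace ℝ (Fin N)) :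
    Set (EuclideanSpace ℝ (Fin N)) :=
  {ξ | ∀ z ∈ tΩ, Γ z ≤ Γ x + (inner ℝ ξ (z - x) : ℝ)}

/-- `∇Γ(S) = ⋃_{x ∈ S} ∇Γ(x)`. -/
def superDiffSet (N : ℕ) (tΩ : Set (EuclideanSpace ℝ (Fin N)))
    (Γ : EuclideanSpace ℝ (Fin N) → ℝ) (S : Set (EuclideanSpace ℝ (Fin N))) :
    Set (EuclideanSpace ℝ (Fin N)) :=
  ⋃ x ∈ S, superDiff N tΩ Γ x

lemma aux_limsup_le {N : ℕ} (f : EuclideanSpace ℝ (Fin N) → ℝ) (M : ℝ) (hM : ∀ y, |f y| ≤ M)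
    (x ξ : EuclideanSpace ℝ (Fin N)) (c : ℝ)
    (h : ∀ᶠ y in nhds x, f y ≤ (inner ℝ ξ y : ℝ) + c) :
    Filter.limsup f (nhds x) ≤ (inner ℝ ξ x : ℝ) + c := by
  refine le_of_forall_pos_le_add fun η hη => ?_
  have hc : Continuous fun y : EuclideanSpace ℝ (Fin N) => (inner ℝ ξ y : ℝ) + c := by fun_prop
  have h1 : ∀ᶠ y in nhds x, (inner ℝ ξ y : ℝ) + c < (inner ℝ ξ x : ℝ) + c + η :=
    hc.continuousAt.eventually_lt continuousAt_const (by linarith)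
  apply Filter.limsup_le_of_le
  · exact Filter.isCoboundedUnder_le_of_le (x := -M) _ (fun y => (abs_le.1 (hM y)).1)
  · filter_upwards [h, h1] with y a b
    linarith

lemma aux_le_limsup {N : ℕ} (f : EuclideanSpace ℝ (Fin N) → ℝ) (M : ℝ) (hM : ∀ y, |f y| ≤ M)
    (x ξ : EuclideanSpace ℝ (Fin N)) (c : ℝ) (y : ℕ → EuclideanSpace ℝ (Fin N))
    (hy : Filter.Tendsto y Filter.atTop (nhds x)) (δ : ℕ → ℝ)
    (hδ : Filter.Tendsto δ Filter.atTop (nhds 0))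
    (h : ∀ n, (inner ℝ ξ (y n) : ℝ) + c - δ n ≤ f (y n)) :
    (inner ℝ ξ x : ℝ) + c ≤ Filter.limsup f (nhds x) := by
  refine le_of_forall_pos_le_add fun η hη => ?_
  rw [← sub_le_iff_le_add]
  have hc : Continuous fun y : EuclideanSpace ℝ (Fin N) => (inner ℝ ξ y : ℝ) + c := by fun_prop
  have h1 : Filter.Tendsto (fun n => (inner ℝ ξ (y n) : ℝ) + c - δ n) Filter.atTop
      (nhds ((inner ℝ ξ x : ℝ) + c - 0)) := ((hc.tendsto x).comp hy).sub hδ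
  have h2 : ∀ᶠ n in Filter.atTop, (inner ℝ ξ x : ℝ) + c - η < (inner ℝ ξ (y n) : ℝ) + c - δ n :=
    h1.eventually (lt_mem_nhds (by linarith))
  apply Filter.le_limsup_of_frequently_le
  · apply hy.frequently
    apply Filter.Eventually.frequently
    filter_upwards [h2] with n hn
    linarith [h n]
  · exact Filter.isBoundedUnder_of ⟨M, fun y => (abs_le.1 (hM y)).2⟩

lemma aux_ball_subset (N : ℕ) (hN : 1 ≤ N) (Λ ε : ℝ) (hΛ : 1 ≤ Λ)
    (hε : 0 < ε)
    (D : Set (EuclideanSpace ℝ (Fin N))) (hD : IsOpen D) (hDc : IsConnected D)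
    (hDb : Bornology.IsBounded D)
    (u : EuclideanSpace ℝ (Fin N) → ℝ) (hub : ∃ M, ∀ y, |u y| ≤ M)
    (hu0 : ∀ x ∉ D, u x ≤ 0) (ξ : EuclideanSpace ℝ (Fin N))
    (hξ : (diam D + Λ * ε) * ‖ξ‖ < sSup (u '' D)) :
    ξ ∈ superDiffSet N (tildeOmega N Λ ε D) (concaveEnvelope N Λ ε D u)
            (contactSet N Λ ε D u) := by
  obtain ⟨M, hM⟩ := hub
  have hLe : 0 < Λ * ε := by positivity
  set T := tildeOmega N Λ ε D with hT
  have hTo : IsOpen T := isOpen_lt (continuous_infDist_pt D) continuous_const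
  have hclT : closure D ⊆ T := by
    intro x hx
    change infDist x D < Λ * ε
    rw [(mem_closure_iff_infDist_zero hDc.nonempty).1 hx]
    exact hLe
  have hbdd : BddAbove (u '' Dᶜ) := ⟨M, by rintro _ ⟨y, _, rfl⟩; exact (abs_le.1 (hM y)).2⟩
  set m := sSup (u '' Dᶜ) with hm
  have hM0 : 0 ≤ M := (abs_nonneg _).trans (hM 0)
  have hm0 : m ≤ 0 := Real.sSup_nonpos (by rintro _ ⟨y, hy, rfl⟩; exact hu0 y hy)
  have hmM : -M ≤ m := by
    by_cases hne : (Dᶜ).Nonempty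
    · obtain ⟨y, hy⟩ := hne
      exact (abs_le.1 (hM y)).1.trans (le_csSup hbdd ⟨y, hy, rfl⟩)
    · rw [Set.not_nonempty_iff_eq_empty] at hne
      rw [hm, hne]; simpa using hM0
  set f := uPlus N D u with hf
  have hfM : ∀ y, |f y| ≤ M := by
    intro y
    have := abs_le.1 (hM y)
    rw [abs_le]
    exact ⟨this.1.trans (le_max_left _ _), max_le this.2 (by linarith)⟩
  have hfu : ∀ y, u y ≤ f y := fun y => le_max_left _ _
  have hfout : ∀ y ∉ D, f y ≤ 0 := fun y hy => max_le (hu0 y hy) hm0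
  obtain ⟨_, ⟨x0, hx0, rfl⟩, hx0'⟩ := exists_lt_of_lt_csSup (hDc.nonempty.image u) hξ
  -- the function to be maximised
  set w : EuclideanSpace ℝ (Fin N) → ℝ := fun y => f y - (inner ℝ ξ y : ℝ) with hw
  obtain ⟨B, hB⟩ := hDb.exists_norm_le
  have hwb : BddAbove (w '' D) := by
    refine ⟨M + ‖ξ‖ * B, ?_⟩
    rintro _ ⟨y, hy, rfl⟩
    have h1 := (abs_le.1 (hfM y)).2
    have h2 := (abs_le.1 (abs_real_inner_le_norm ξ y)).1
    have h3 := mul_le_mul_of_nonneg_left (hB y hy) (norm_nonneg ξ)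
    simp only [hw]
    linarith
  set c := sSup (w '' D) with hc
  have hwc : ∀ y ∈ T, f y ≤ (inner ℝ ξ y : ℝ) + c := by
    intro y hy
    by_cases hyD : y ∈ D
    · have : w y ≤ c := le_csSup hwb ⟨y, hyD, rfl⟩
      simp only [hw] at this
      linarith
    · have h0 : w x0 ≤ c := le_csSup hwb ⟨x0, hx0, rfl⟩
      obtain ⟨z, hz, hyz⟩ := (infDist_lt_iff hDc.nonempty).1 (show infDist y D < Λ * ε from hy)
      have hd : dist x0 y ≤ diam D + Λ * ε := by
        have := dist_triangle x0 z y
        have h2 := dist_le_diam_of_mem hDb hx0 hz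
        rw [dist_comm z y] at this
        linarith
      have h1 := (abs_le.1 (abs_real_inner_le_norm ξ (x0 - y))).2
      rw [inner_sub_right, ← dist_eq_norm] at h1
      have h2 := mul_le_mul_of_nonneg_left hd (norm_nonneg ξ)
      have h3 := hfout y hyD
      have h4 := hfu x0
      simp only [hw] at h0
      linarith
  have hex : ∀ n : ℕ, ∃ y ∈ D, c - 1 / ((n : ℝ) + 1) < w y := by
    intro n
    have hp : (0 : ℝ) < 1 / ((n : ℝ) + 1) := by positivity
    obtain ⟨_, ⟨y, hy, rfl⟩, h⟩ := exists_lt_of_lt_csSup (hDc.nonempty.image w)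
      (show c - 1 / ((n : ℝ) + 1) < sSup (w '' D) by linarith)
    exact ⟨y, hy, h⟩
  choose y hyD hyw using hex
  obtain ⟨x, hx, φ, hφ, hlim⟩ := hDb.isCompact_closure.tendsto_subseq
    (fun n => subset_closure (hyD n))
  have hxT := hclT hx
  have hnear : ∀ (ζ : EuclideanSpace ℝ (Fin N)) (d : ℝ),
      (∀ y ∈ T, f y ≤ (inner ℝ ζ y : ℝ) + d) →
      Filter.limsup f (nhds x) ≤ (inner ℝ ζ x : ℝ) + d := fun ζ d h =>
    aux_limsup_le f M hfM x ζ d (Filter.mem_of_superset (hTo.mem_nhds hxT) h)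
  have hge : (inner ℝ ξ x : ℝ) + c ≤ Filter.limsup f (nhds x) := by
    refine aux_le_limsup f M hfM x ξ c (y ∘ φ) hlim (fun n => 1 / ((φ n : ℝ) + 1))
      (tendsto_one_div_add_atTop_nhds_zero_nat.comp hφ.tendsto_atTop) fun n => ?_
    have := hyw (φ n)
    simp only [hw] at this
    simp only [Function.comp]
    linarith
  have hΓ : ∀ z ∈ T, concaveEnvelope N Λ ε D u z ≤ (inner ℝ ξ z : ℝ) + c := by
    intro z hz
    unfold concaveEnvelope
    rw [if_pos hz]
    refine csInf_le ⟨-M, ?_⟩ ⟨ξ, c, hwc, rfl⟩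
    rintro _ ⟨ζ, d, h, rfl⟩
    exact (abs_le.1 (hfM z)).1.trans (h z hz)
  have hΓx : Filter.limsup f (nhds x) ≤ concaveEnvelope N Λ ε D u x := by
    unfold concaveEnvelope
    rw [if_pos hxT]
    refine le_csInf ⟨_, ξ, c, hwc, rfl⟩ ?_
    rintro _ ⟨ζ, d, h, rfl⟩
    exact hnear ζ d h
  have h1 := hΓ x hxT
  unfold superDiffSet
  simp only [Set.mem_iUnion]
  refine ⟨x, ⟨hx, le_antisymm hΓx (h1.trans hge)⟩, fun z hz => ?_⟩
  have := hΓ z hz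
  rw [inner_sub_right]
  linarith

/-- `sup_Ω u ≤ (diam Ω + Λε) (|∇Γ(K_u)| / |B₁|)^{1/N}`. -/
theorem sup_le_measure_superdifferential (N : ℕ) (hN : 1 ≤ N) (Λ ε : ℝ) (hΛ : 1 ≤ Λ)
    (hε : 0 < ε)
    (D : Set (EuclideanSpace ℝ (Fin N))) (hD : IsOpen D) (hDc : IsConnected D)
    (hDb : Bornology.IsBounded D)
    (u : EuclideanSpace ℝ (Fin N) → ℝ) (hub : ∃ M, ∀ y, |u y| ≤ M)
    (hu0 : ∀ x ∉ D, u x ≤ 0) :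
    ENNReal.ofReal (sSup (u '' D)) ≤
      ENNReal.ofReal (diam D + Λ * ε) *
        (volume (superDiffSet N (tildeOmega N Λ ε D) (concaveEnvelope N Λ ε D u)
            (contactSet N Λ ε D u)) /
          volume (ball (0 : EuclideanSpace ℝ (Fin N)) 1)) ^ ((1 : ℝ) / N) := by
  rcases le_or_gt (sSup (u '' D)) 0 with hS | hS
  · rw [ENNReal.ofReal_of_nonpos hS]; exact zero_le
  set S := sSup (u '' D) with hSdef
  have hR : 0 < diam D + Λ * ε := by
    have : 0 ≤ diam D := diam_nonneg
    positivity
  set R := diam D + Λ * ε with hRdef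
  have hsub : ball (0 : EuclideanSpace ℝ (Fin N)) (S / R) ⊆
      superDiffSet N (tildeOmega N Λ ε D) (concaveEnvelope N Λ ε D u)
            (contactSet N Λ ε D u) := by
    intro ξ hξ
    apply aux_ball_subset N hN Λ ε hΛ hε D hD hDc hDb u hub hu0 ξ
    rw [mem_ball_zero_iff, lt_div_iff₀ hR] at hξ
    rw [mul_comm]
    exact hξ
  have hvol := measure_mono (μ := volume) hsub
  rw [Measure.addHaar_ball_of_pos _ _ (by positivity), finrank_euclideanSpace_fin] at hvol
  have hN0 : (N : ℝ) ≠ 0 := by positivity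
  have hb0 : volume (ball (0 : EuclideanSpace ℝ (Fin N)) 1) ≠ 0 :=
    (measure_ball_pos _ _ one_pos).ne'
  have hbt : volume (ball (0 : EuclideanSpace ℝ (Fin N)) 1) ≠ ⊤ := measure_ball_lt_top.ne
  have h1 := (ENNReal.le_div_iff_mul_le (Or.inl hb0) (Or.inl hbt)).2 hvol
  have h2 := ENNReal.rpow_le_rpow h1 (show (0 : ℝ) ≤ 1 / N by positivity)
  rw [ENNReal.ofReal_pow (by positivity), ← ENNReal.rpow_natCast, ← ENNReal.rpow_mul,
    mul_one_div_cancel hN0, ENNReal.rpow_one] at h2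
  calc ENNReal.ofReal S = ENNReal.ofReal R * ENNReal.ofReal (S / R) := by
        rw [← ENNReal.ofReal_mul hR.le, mul_div_cancel₀ _ hR.ne']
    _ ≤ _ := by gcongr
end
end

section
/- Let Ω ⊂ ℝ^N be a bounded domain, let x_0 = x ∈ Ω, let τ = inf{k ≥ 0 : X_k ∉ Ω} be the exit time from Ω, and let f : Ω → ℝ be a nonnegative bounded Borel measurable function, extended by 0 outside Ω. Then there exists a constant C > 0 depending only on N such that E[ ε² Σ_{i=0}^{τ−1} f(X_i) ] ≤ ( ε² + α E[ε² τ] ) · sup_Ω f + C (diam Ω + Λε) ( ∫_Ω f(y)^N dy )^{1/N}. -/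
open MeasureTheory Metric
open scoped ENNReal
noncomputable section

section ABP
variable {E : Type*} [NormedAddCommGroup E] [InnerProductSpace ℝ E]

/-- strict slopes at the `i`-th point -/
def slopeT {ι : Type*} (P : ι → E) (R : ℝ) (h : ι → ℝ) (i : ι) : Set E :=
  {p | R * ‖p‖ < h i - inner ℝ p (P i) ∧
    ∀ j, j ≠ i → h j - inner ℝ p (P j) < h i - inner ℝ p (P i)}

/-- slopes at the `i`-th point -/
def slopeS {ι : Type*} (P : ι → E) (R : ℝ) (h : ι → ℝ) (i : ι) : Set E :=
  {p | R * ‖p‖ ≤ h i - inner ℝ p (P i) ∧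
    ∀ j, h j - inner ℝ p (P j) ≤ h i - inner ℝ p (P i)}

variable [FiniteDimensional ℝ E] [MeasurableSpace E] [BorelSpace E]

lemma hyperplane_null (μ : Measure E) [μ.IsAddHaarMeasure] (w : E) (hw : w ≠ 0) (c : ℝ) :
    μ {p | inner ℝ p w = c} = 0 := by
  let S : AffineSubspace ℝ E :=
    { carrier := {p | inner ℝ p w = c}
      smul_vsub_vadd_mem' := by
        intro t p1 p2 p3 h1 h2 h3
        simp only [Set.mem_ofPred_eq, vsub_eq_sub, vadd_eq_add, inner_add_left, inner_smul_left,
          inner_sub_left] at *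
        rw [h1, h2, h3]; simp }
  have : S ≠ ⊤ := by
    intro hS
    have h0 : ∀ p : E, inner ℝ p w = c := by
      intro p
      have : p ∈ S := by rw [hS]; trivial
      exact this
    have h1 := h0 0
    have h2 := h0 w
    rw [inner_zero_left] at h1
    rw [← h1] at h2
    exact hw (inner_self_eq_zero.1 h2)
  exact Measure.addHaar_affineSubspace μ S this

lemma slope_cover {ι : Type*} [Fintype ι] (μ : Measure E) [μ.IsAddHaarMeasure]
    (P : ι → E) (hP : Function.Injective P) (R : ℝ) (hR : 0 < R)
    (hPR : ∀ i, ‖P i‖ < R) (h : ι → ℝ) (i : ι) :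
    μ (ball 0 (h i / (2 * R))) ≤ ∑ j, μ (slopeT P R h j) := by
  have hsub : ball (0 : E) (h i / (2 * R)) ⊆ (⋃ j, slopeT P R h j) ∪
      ⋃ j : ι, ⋃ k : ι, ⋃ _ : j ≠ k, {p | inner ℝ p (P j - P k) = h j - h k} := by
    intro p hp
    rw [mem_ball_zero_iff, lt_div_iff₀ (by positivity)] at hp
    have : Nonempty ι := ⟨i⟩
    obtain ⟨j, hj⟩ := Finite.exists_max (fun j => h j - inner ℝ p (P j))
    have h1 : R * ‖p‖ < h j - inner ℝ p (P j) := by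
      refine lt_of_lt_of_le ?_ (hj i)
      have := real_inner_le_norm p (P i)
      have h2 : ‖p‖ * ‖P i‖ ≤ ‖p‖ * R := by gcongr; exact (hPR i).le
      linarith
    by_cases hs : ∀ k, k ≠ j → h k - inner ℝ p (P k) < h j - inner ℝ p (P j)
    · left; exact Set.mem_iUnion.2 ⟨j, h1, hs⟩
    · right
      push Not at hs
      obtain ⟨k, hk, hk2⟩ := hs
      have := hj k
      simp only [Set.mem_iUnion]
      refine ⟨j, k, hk.symm, ?_⟩
      simp only [Set.mem_ofPred_eq, inner_sub_right]
      linarith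
  calc μ _ ≤ _ := measure_mono hsub
    _ ≤ μ (⋃ j, slopeT P R h j) + μ (⋃ j : ι, ⋃ k : ι, ⋃ _ : j ≠ k, {p | inner ℝ p (P j - P k) = h j - h k}) := measure_union_le _ _
    _ = μ (⋃ j, slopeT P R h j) + 0 := by
      congr 1
      refine measure_iUnion_null fun j => measure_iUnion_null fun k => measure_iUnion_null fun hjk => ?_
      exact hyperplane_null μ _ (sub_ne_zero.2 (fun h => hjk (hP h))) _
    _ ≤ _ := by rw [add_zero]; exact measure_iUnion_fintype_le _ _

lemma slope_exists {ι : Type*} [Fintype ι] (μ : Measure E) [μ.IsAddHaarMeasure]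
    [Nontrivial E]
    (P : ι → E) (hP : Function.Injective P) (R : ℝ) (hR : 0 < R)
    (hPR : ∀ i, ‖P i‖ < R) (r : ι → ℝ) (hr : ∀ i, 0 ≤ r i) :
    ∃ h : ι → ℝ, (∀ i, 0 ≤ h i) ∧
      (∀ i, h i ≤ 2 * R * (∑ j, r j ^ Module.finrank ℝ E) ^ ((Module.finrank ℝ E : ℝ)⁻¹)) ∧
      ∀ i, μ (ball 0 (r i)) ≤ μ (slopeS P R h i) := by
  classical
  have hd : Module.finrank ℝ E ≠ 0 := Module.finrank_pos.ne'
  set d := Module.finrank ℝ E with hdd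
  set B := 2 * R * (∑ j, r j ^ d) ^ ((d : ℝ)⁻¹) with hB
  have hsum : 0 ≤ ∑ j, r j ^ d := Finset.sum_nonneg fun j _ => pow_nonneg (hr j) _
  have hB0 : 0 ≤ B := by positivity
  let H : Set (ι → ℝ) := {h | ∀ i, μ (slopeT P R h i) ≤ μ (ball 0 (r i))}
  have h0 : (0 : ι → ℝ) ∈ H := by
    intro i
    have : slopeT P R 0 i = ∅ := by
      ext p
      simp only [slopeT, Pi.zero_apply, zero_sub, Set.mem_ofPred_eq, Set.mem_empty_iff_false, iff_false, not_and]
      intro h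
      exfalso
      have := neg_le_of_abs_le (abs_real_inner_le_norm p (P i))
      have h2 : ‖p‖ * ‖P i‖ ≤ ‖p‖ * R := by gcongr; exact (hPR i).le
      linarith
    rw [this]; simp
  have hb : ∀ h ∈ H, ∀ i, h i ≤ B := by
    intro h hh i
    by_cases hi : h i ≤ 0
    · exact hi.trans hB0
    push Not at hi
    have h1 := (slope_cover μ P hP R hR hPR h i).trans (Finset.sum_le_sum fun j _ => hh j)
    rw [Measure.addHaar_ball _ _ (by positivity)] at h1
    have h2 : ∀ j ∈ Finset.univ, μ (ball (0 : E) (r j)) = ENNReal.ofReal (r j ^ d) * μ (ball (0 : E) 1) :=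
      fun j _ => Measure.addHaar_ball _ _ (hr j)
    rw [Finset.sum_congr rfl h2, ← Finset.sum_mul,
      ENNReal.mul_le_mul_iff_left (measure_ball_pos μ _ one_pos).ne' measure_ball_lt_top.ne,
      ← ENNReal.ofReal_sum_of_nonneg (fun j _ => pow_nonneg (hr j) _),
      ENNReal.ofReal_le_ofReal_iff hsum] at h1
    have h3 : h i / (2 * R) ≤ (∑ j, r j ^ d) ^ ((d : ℝ)⁻¹) := by
      rw [← Real.pow_rpow_inv_natCast (show 0 ≤ h i / (2 * R) by positivity) hd]
      exact Real.rpow_le_rpow (by positivity) h1 (by positivity)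
    rw [div_le_iff₀ (by positivity)] at h3
    rw [hB]; linarith
  have hbdd : ∀ i, BddAbove ((fun h : ι → ℝ => h i) '' H) := by
    intro i
    refine ⟨B, ?_⟩
    rintro _ ⟨h, hh, rfl⟩
    exact hb h hh i
  let hs : ι → ℝ := fun i => sSup ((fun h : ι → ℝ => h i) '' H)
  have hle : ∀ h ∈ H, ∀ i, h i ≤ hs i := fun h hh i => le_csSup (hbdd i) ⟨h, hh, rfl⟩
  have hsH : hs ∈ H := by
    intro i
    let U : ℕ → Set E := fun n => {p | R * ‖p‖ < hs i - 1 / ((n : ℝ) + 1) - inner ℝ p (P i) ∧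
      ∀ j, j ≠ i → hs j - inner ℝ p (P j) < hs i - 1 / ((n : ℝ) + 1) - inner ℝ p (P i)}
    have hU : slopeT P R hs i ⊆ ⋃ n, U n := by
      rintro p ⟨hp1, hp2⟩
      have : ∀ᶠ n : ℕ in Filter.atTop, p ∈ U n := by
        have ht : Filter.Tendsto (fun n : ℕ => hs i - 1 / ((n : ℝ) + 1) - inner ℝ p (P i)) Filter.atTop
            (nhds (hs i - 0 - inner ℝ p (P i))) :=
          (tendsto_const_nhds.sub tendsto_one_div_add_atTop_nhds_zero_nat).sub tendsto_const_nhds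
        rw [sub_zero] at ht
        refine (ht.eventually_const_lt hp1).and ?_
        rw [Filter.eventually_all]
        intro j
        by_cases hj : j = i
        · simp [hj]
        · filter_upwards [ht.eventually_const_lt (hp2 j hj)] with n hn _ using hn
      obtain ⟨n, hn⟩ := this.exists
      exact Set.mem_iUnion.2 ⟨n, hn⟩
    have hUm : Monotone U := by
      intro n m hnm p hp
      have : 1 / ((m : ℝ) + 1) ≤ 1 / ((n : ℝ) + 1) := by gcongr
      refine ⟨by linarith [hp.1], fun j hj => ?_⟩
      have := hp.2 j hj
      linarith
    refine (measure_mono hU).trans ?_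
    rw [hUm.measure_iUnion]
    refine iSup_le fun n => ?_
    obtain ⟨_, ⟨h, hh, rfl⟩, hlt⟩ := exists_lt_of_lt_csSup (s := ((fun h : ι → ℝ => h i) '' H)) ⟨0, 0, h0, rfl⟩
      (show hs i - 1 / ((n : ℝ) + 1) < hs i by
        have : 0 < 1 / ((n : ℝ) + 1) := by positivity
        linarith)
    refine (measure_mono ?_).trans (hh i)
    intro p hp
    simp only at hlt
    refine ⟨by linarith [hp.1], fun j hj => ?_⟩
    have := hp.2 j hj
    have := hle h hh j
    linarith
  refine ⟨hs, fun i => hle 0 h0 i, hb hs hsH, fun i => ?_⟩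
  let W : ℕ → Set E := fun n => slopeT P R (Function.update hs i (hs i + 1 / ((n : ℝ) + 1))) i
  have hWiff : ∀ n p, p ∈ W n ↔ R * ‖p‖ < hs i + 1 / ((n : ℝ) + 1) - inner ℝ p (P i) ∧
      ∀ j, j ≠ i → hs j - inner ℝ p (P j) < hs i + 1 / ((n : ℝ) + 1) - inner ℝ p (P i) := by
    intro n p
    simp only [W, slopeT, Set.mem_ofPred_eq, Function.update_self]
    refine and_congr Iff.rfl (forall_congr' fun j => ?_)
    refine forall_congr' fun hj => ?_
    rw [Function.update_of_ne hj]
  have hW : ∀ n, μ (ball 0 (r i)) ≤ μ (W n) := by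
    intro n
    by_contra hcon
    push Not at hcon
    have hpos : 0 < 1 / ((n : ℝ) + 1) := by positivity
    have : Function.update hs i (hs i + 1 / ((n : ℝ) + 1)) ∈ H := by
      intro j
      by_cases hj : j = i
      · subst hj; exact hcon.le
      · refine (measure_mono ?_).trans (hsH j)
        rintro p ⟨hp1, hp2⟩
        rw [Function.update_of_ne hj] at hp1 hp2
        refine ⟨hp1, fun k hk => lt_of_le_of_lt ?_ (hp2 k hk)⟩
        by_cases hki : k = i
        · subst hki; simp; positivity
        · rw [Function.update_of_ne hki]
    have := hle _ this i
    simp at this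
    have h2 : 0 < ((n : ℝ) + 1)⁻¹ := by positivity
    linarith
  have hWanti : Antitone W := by
    intro n m hnm p hp
    rw [hWiff] at hp ⊢
    have : 1 / ((m : ℝ) + 1) ≤ 1 / ((n : ℝ) + 1) := by gcongr
    refine ⟨by linarith [hp.1], fun j hj => ?_⟩
    have := hp.2 j hj
    linarith
  have hWS : (⋂ n, W n) ⊆ slopeS P R hs i := by
    intro p hp
    rw [Set.mem_iInter] at hp
    have ht : Filter.Tendsto (fun n : ℕ => hs i + 1 / ((n : ℝ) + 1) - inner ℝ p (P i)) Filter.atTop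
        (nhds (hs i + 0 - inner ℝ p (P i))) :=
      (tendsto_const_nhds.add tendsto_one_div_add_atTop_nhds_zero_nat).sub tendsto_const_nhds
    rw [add_zero] at ht
    refine ⟨ge_of_tendsto' ht fun n => (((hWiff n p).1 (hp n)).1).le, fun j => ?_⟩
    by_cases hj : j = i
    · rw [hj]
    · exact ge_of_tendsto' ht fun n => (((hWiff n p).1 (hp n)).2 j hj).le
  refine le_trans ?_ (measure_mono hWS)
  rw [hWanti.measure_iInter]
  · exact le_iInf hW
  · intro n
    have : MeasurableSet (W n) := by
      have : W n = {p | R * ‖p‖ < hs i + 1 / ((n : ℝ) + 1) - inner ℝ p (P i)} ∩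
        ⋂ j : ι, {p | j ≠ i → hs j - inner ℝ p (P j) < hs i + 1 / ((n : ℝ) + 1) - inner ℝ p (P i)} := by
        ext p; rw [hWiff]; simp
      rw [this]
      refine MeasurableSet.inter (measurableSet_lt (by fun_prop) (by fun_prop)) (MeasurableSet.iInter fun j => ?_)
      by_cases hj : j = i
      · simp [hj]
      · simp only [ne_eq, hj, not_false_eq_true, forall_const]
        exact measurableSet_lt (by fun_prop) (by fun_prop)
    exact this.nullMeasurableSet
  · refine ⟨0, ?_⟩
    have : W 0 ⊆ ball 0 ((hs i + 1) / (R - ‖P i‖)) := by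
      intro p hp
      have hp := ((hWiff 0 p).1 hp).1
      have h3 : 0 < R - ‖P i‖ := sub_pos.2 (hPR i)
      rw [mem_ball_zero_iff, lt_div_iff₀ h3]
      have := neg_le_of_abs_le (abs_real_inner_le_norm p (P i))
      simp at hp
      nlinarith
    exact ((measure_mono this).trans_lt measure_ball_lt_top).ne

lemma barrier_exists {ι : Type*} [Fintype ι] (μ : Measure E) [μ.IsAddHaarMeasure]
    [Nontrivial E]
    (P : ι → E) (hP : Function.Injective P) (R : ℝ) (hR : 0 < R)
    (hPR : ∀ i, ‖P i‖ < R) (r : ι → ℝ) (hr : ∀ i, 0 ≤ r i) :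
    ∃ V : E → ℝ, Measurable V ∧ (∀ x, 0 ≤ V x) ∧
      (∀ x, V x ≤ 2 * R * (∑ j, r j ^ Module.finrank ℝ E) ^ ((Module.finrank ℝ E : ℝ)⁻¹)) ∧
      ∀ x, ‖x‖ ≤ R → ∀ η > 0, ∃ k : E,
        (∀ y, ‖y‖ ≤ R → V y ≤ V x + η + inner ℝ k (y - x)) ∧
        ∀ i, ∀ ε > 0, ‖x - P i‖ ≤ ε / 2 → ball x ε ⊆ closedBall 0 R →
          ∃ w, ball w (ε / 8) ⊆ ball x ε ∧
            ∀ y ∈ ball w (ε / 8), V y ≤ V x + η + inner ℝ k (y - x) - r i / 2 * (ε / 8) := by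
  obtain ⟨h, h0, hB, hS⟩ := slope_exists μ P hP R hR hPR r hr
  set B := 2 * R * (∑ j, r j ^ Module.finrank ℝ E) ^ ((Module.finrank ℝ E : ℝ)⁻¹) with hBdef
  have hsum : 0 ≤ ∑ j, r j ^ Module.finrank ℝ E :=
    Finset.sum_nonneg fun j _ => pow_nonneg (hr j) _
  have hB0 : 0 ≤ B := by positivity
  let A : Type _ := {a : E × ℝ // R * ‖a.1‖ ≤ a.2 ∧ ∀ i, h i ≤ inner ℝ a.1 (P i) + a.2}
  let a0 : A := ⟨(0, B), by simpa using hB0, fun i => by simpa using hB i⟩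
  have : Nonempty A := ⟨a0⟩
  let L : A → E → ℝ := fun a y => inner ℝ a.1.1 y + a.1.2
  let V : E → ℝ := fun y => ⨅ a : A, max 0 (L a y)
  have hbdd : ∀ y, BddBelow (Set.range fun a : A => max 0 (L a y)) := by
    intro y
    refine ⟨0, ?_⟩
    rintro _ ⟨a, rfl⟩
    exact le_max_left _ _
  have hLpos : ∀ a y, ‖y‖ ≤ R → 0 ≤ L a y := by
    intro a y hy
    have h1 := neg_le_of_abs_le (abs_real_inner_le_norm a.1.1 y)
    have h2 : ‖a.1.1‖ * ‖y‖ ≤ ‖a.1.1‖ * R := by gcongr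
    have h3 := a.2.1
    simp only [L]
    linarith
  have hVL : ∀ a y, ‖y‖ ≤ R → V y ≤ L a y := by
    intro a y hy
    refine (ciInf_le (hbdd y) a).trans ?_
    rw [max_eq_right (hLpos a y hy)]
  refine ⟨V, ?_, ?_, ?_, ?_⟩
  · refine UpperSemicontinuous.measurable (upperSemicontinuous_ciInf hbdd fun a => ?_)
    refine Continuous.upperSemicontinuous ?_
    simp only [L]
    fun_prop
  · exact fun x => le_ciInf fun a => le_max_left _ _
  · intro x
    refine (ciInf_le (hbdd x) a0).trans ?_
    simp [L, a0, hB0]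
  · intro x hx η hη
    obtain ⟨a, ha⟩ := exists_lt_of_ciInf_lt (show (⨅ a : A, max 0 (L a x)) < V x + η by
      simp only [V]; linarith)
    have ha' : L a x ≤ V x + η := (le_max_right _ _).trans ha.le
    have hLa : ∀ y, L a y = L a x + inner ℝ a.1.1 (y - x) := by
      intro y; simp only [L, inner_sub_right]; ring
    refine ⟨a.1.1, fun y hy => ?_, ?_⟩
    · have := hVL a y hy
      rw [hLa y] at this
      linarith
    · intro i ε hε hxi hball
      -- the touching slope
      by_cases hri : r i = 0
      · refine ⟨x, ball_subset_ball (by linarith), fun y hy => ?_⟩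
        have hy' : y ∈ closedBall (0 : E) R := hball (ball_subset_ball (by linarith) hy)
        have := hVL a y (mem_closedBall_zero_iff.1 hy')
        rw [hLa y] at this
        rw [hri]; linarith
      have hri' : 0 < r i := lt_of_le_of_ne (hr i) (Ne.symm hri)
      obtain ⟨p, hpS, hpk⟩ : ∃ p ∈ slopeS P R h i, r i / 2 ≤ ‖a.1.1 - p‖ := by
        by_contra hcon
        push Not at hcon
        have hsub : slopeS P R h i ⊆ ball a.1.1 (r i / 2) := by
          intro p hp
          rw [mem_ball, dist_comm, dist_eq_norm]
          exact hcon p hp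
        have h1 := (hS i).trans (measure_mono hsub)
        rw [Measure.addHaar_ball _ _ hri'.le, Measure.addHaar_ball μ a.1.1 (by positivity),
          ENNReal.mul_le_mul_iff_left (measure_ball_pos μ _ one_pos).ne' measure_ball_lt_top.ne,
          ENNReal.ofReal_le_ofReal_iff (by positivity)] at h1
        have : (r i / 2) ^ Module.finrank ℝ E < r i ^ Module.finrank ℝ E :=
          pow_lt_pow_left₀ (by linarith) (by positivity) Module.finrank_pos.ne'
        linarith
      let b : A := ⟨(p, h i - inner ℝ p (P i)), hpS.1, fun j => by have := hpS.2 j; simp only; linarith⟩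
      set q := a.1.1 - p with hq
      have hq0 : 0 < ‖q‖ := lt_of_lt_of_le (by linarith) hpk
      set w := P i + (ε / (4 * ‖q‖)) • q with hw
      have hwP : ‖w - P i‖ = ε / 4 := by
        rw [hw, add_sub_cancel_left, norm_smul, Real.norm_of_nonneg (by positivity)]
        field_simp
      have hsub : ball w (ε / 8) ⊆ ball x ε := by
        apply ball_subset_ball'
        have h1 : dist w x ≤ ε / 4 + ε / 2 := by
          rw [dist_eq_norm]
          calc ‖w - x‖ = ‖(w - P i) - (x - P i)‖ := by congr 1; abel
            _ ≤ _ := norm_sub_le _ _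
            _ ≤ _ := by rw [hwP]; gcongr
        linarith
      refine ⟨w, hsub, fun y hy => ?_⟩
      have hy' : ‖y‖ ≤ R := mem_closedBall_zero_iff.1 (hball (hsub hy))
      have h1 := hVL b y hy'
      have h2 : L b y = L a y - (inner ℝ q (y - P i) + (inner ℝ a.1.1 (P i) + a.1.2 - h i)) := by
        simp only [L, b, hq, inner_sub_left, inner_sub_right]; ring
      have h3 := a.2.2 i
      have h4 : ‖q‖ * (ε / 8) ≤ inner ℝ q (y - P i) := by
        have e1 : y - P i = (y - w) + (ε / (4 * ‖q‖)) • q := by rw [hw]; abel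
        rw [e1, inner_add_right, inner_smul_right, real_inner_self_eq_norm_sq]
        have e2 := neg_le_of_abs_le (abs_real_inner_le_norm q (y - w))
        have e3 : ‖q‖ * ‖y - w‖ ≤ ‖q‖ * (ε / 8) := by
          gcongr
          rw [← dist_eq_norm]; exact (mem_ball.1 hy).le
        have e4 : ε / (4 * ‖q‖) * ‖q‖ ^ 2 = ‖q‖ * (ε / 4) := by field_simp
        rw [e4]; linarith
      have h5 : r i / 2 * (ε / 8) ≤ ‖q‖ * (ε / 8) := by gcongr
      rw [hLa y] at h2
      linarith

/-- average drop of the barrier -/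
lemma inner_ball_integral (μ : Measure E) [μ.IsAddHaarMeasure] (k x : E) (ε : ℝ) :
    ∫ y in ball x ε, (inner ℝ k (y - x) : ℝ) ∂μ = 0 := by
  have h1 : ∫ y in ball x ε, (inner ℝ k (y - x) : ℝ) ∂μ
      = ∫ y, (ball (0 : E) ε).indicator (fun z => (inner ℝ k z : ℝ)) (y - x) ∂μ := by
    rw [← integral_indicator measurableSet_ball]
    congr 1
    ext y
    simp [Set.indicator, mem_ball, dist_eq_norm]
  rw [h1, integral_sub_right_eq_self (fun z => (ball (0 : E) ε).indicator (fun z => (inner ℝ k z : ℝ)) z) x]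
  have h2 := integral_neg_eq_self (fun z => (ball (0 : E) ε).indicator (fun z => (inner ℝ k z : ℝ)) z) μ
  have h3 : ∀ z : E, (ball (0 : E) ε).indicator (fun z => (inner ℝ k z : ℝ)) (-z)
      = - (ball (0 : E) ε).indicator (fun z => (inner ℝ k z : ℝ)) z := by
    intro z
    by_cases hz : ‖z‖ < ε <;> simp [Set.indicator, hz]
  simp only [h3, integral_neg] at h2
  linarith

lemma ball_average_drop (μ : Measure E) [μ.IsAddHaarMeasure] [Nontrivial E]
    (V : E → ℝ) (hV : Measurable V) (M : ℝ) (hM : ∀ x, |V x| ≤ M)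
    (x k w : E) (ε c s : ℝ) (hε : 0 < ε)
    (hsub : ball w (ε / 8) ⊆ ball x ε)
    (h1 : ∀ y ∈ ball x ε, V y ≤ c + inner ℝ k (y - x))
    (h2 : ∀ y ∈ ball w (ε / 8), V y ≤ c + inner ℝ k (y - x) - s) :
    ⨍ y in ball x ε, V y ∂μ ≤ c - s * (1 / 8) ^ Module.finrank ℝ E := by
  have hfin : μ (ball x ε) ≠ ∞ := measure_ball_lt_top.ne
  have hpos : 0 < μ.real (ball x ε) :=
    ENNReal.toReal_pos (measure_ball_pos μ _ hε).ne' hfin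
  have hVi : IntegrableOn V (ball x ε) μ :=
    Measure.integrableOn_of_bounded hfin hV.aestronglyMeasurable (M := M)
      (Filter.Eventually.of_forall fun y => by simpa using hM y)
  have hki : IntegrableOn (fun y => (inner ℝ k (y - x) : ℝ)) (ball x ε) μ := by
    have : Continuous (fun y => (inner ℝ k (y - x) : ℝ)) := by fun_prop
    exact (this.continuousOn.integrableOn_compact (isCompact_closedBall x ε)).mono_set ball_subset_closedBall
  have hind : IntegrableOn ((ball w (ε / 8)).indicator fun _ => s) (ball x ε) μ :=
    (integrableOn_const hfin).indicator measurableSet_ball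
  have hc : IntegrableOn (fun _ => c) (ball x ε) μ := integrableOn_const hfin
  have hle : ∫ y in ball x ε, V y ∂μ ≤
      ∫ y in ball x ε, (c + inner ℝ k (y - x)) - (ball w (ε / 8)).indicator (fun _ => s) y ∂μ := by
    refine setIntegral_mono_on hVi ((hc.add hki).sub hind) measurableSet_ball fun y hy => ?_
    by_cases hyw : y ∈ ball w (ε / 8)
    · simpa [hyw] using h2 y hyw
    · simpa [hyw] using h1 y hy
  have hck : IntegrableOn (fun y => c + (inner ℝ k (y - x) : ℝ)) (ball x ε) μ := hc.add hki
  rw [integral_sub hck hind, integral_add hc hki, inner_ball_integral,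
    integral_indicator measurableSet_ball, Measure.restrict_restrict measurableSet_ball,
    Set.inter_eq_left.2 hsub, setIntegral_const, setIntegral_const] at hle
  have hvol : μ.real (ball w (ε / 8)) = (1 / 8) ^ Module.finrank ℝ E * μ.real (ball x ε) := by
    simp only [measureReal_def]
    rw [Measure.addHaar_ball _ _ hε.le, Measure.addHaar_ball _ _ (by positivity),
      ENNReal.toReal_mul, ENNReal.toReal_mul, ENNReal.toReal_ofReal (by positivity),
      ENNReal.toReal_ofReal (by positivity), div_pow, div_pow]
    ring
  rw [hvol] at hle
  rw [setAverage_eq, smul_eq_mul, inv_mul_le_iff₀ hpos]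
  simp only [smul_eq_mul] at hle
  linarith

lemma packing_card (μ : Measure E) [μ.IsAddHaarMeasure] [Nontrivial E] (t : Finset E) (s ρ : ℝ)
    (hs : 0 < s) (hρ : 0 < ρ) (y : E) (hty : ∀ p ∈ t, dist p y < ρ)
    (hsep : ∀ p ∈ t, ∀ q ∈ t, p ≠ q → s ≤ dist p q) :
    (t.card : ℝ) ≤ ((2 * ρ + s) / s) ^ Module.finrank ℝ E := by
  have hdisj : (t : Set E).PairwiseDisjoint (fun p => ball p (s / 2)) := by
    intro p hp q hq hpq
    exact ball_disjoint_ball (by have := hsep p hp q hq hpq; linarith)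
  have hsub : (⋃ p ∈ t, ball p (s / 2)) ⊆ ball y (ρ + s / 2) := by
    refine Set.iUnion₂_subset fun p hp => ball_subset_ball' ?_
    have := hty p hp
    linarith
  have h1 := measure_mono (μ := μ) hsub
  rw [measure_biUnion_finset hdisj (fun _ _ => measurableSet_ball),
    Measure.addHaar_ball μ y (by positivity)] at h1
  have h2 : ∀ p ∈ t, μ (ball p (s / 2)) =
      ENNReal.ofReal ((s / 2) ^ Module.finrank ℝ E) * μ (ball (0 : E) 1) :=
    fun p _ => Measure.addHaar_ball μ p (by positivity)
  rw [Finset.sum_congr rfl h2, ← Finset.sum_mul,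
    ENNReal.mul_le_mul_iff_left (measure_ball_pos μ _ one_pos).ne' measure_ball_lt_top.ne,
    ← ENNReal.ofReal_sum_of_nonneg (fun j _ => by positivity),
    ENNReal.ofReal_le_ofReal_iff (by positivity), Finset.sum_const, nsmul_eq_mul] at h1
  rw [div_pow, le_div_iff₀ (by positivity)]
  have h3 : ρ + s / 2 = (2 * ρ + s) / 2 := by ring
  rw [h3, div_pow, div_pow] at h1
  have : (0 : ℝ) < 2 ^ Module.finrank ℝ E := by positivity
  rw [← mul_div_assoc, div_le_div_iff_of_pos_right this] at h1
  exact h1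

lemma net_exists (μ : Measure E) [μ.IsAddHaarMeasure] [Nontrivial E] (D : Set E)
    (hD : Bornology.IsBounded D) (s : ℝ) (hs : 0 < s) :
    ∃ t : Finset E, (∀ p ∈ t, p ∈ D) ∧ (∀ p ∈ t, ∀ q ∈ t, p ≠ q → s ≤ dist p q) ∧
      ∀ x ∈ D, ∃ p ∈ t, dist x p < s := by
  classical
  obtain ⟨ρ, hρ, hDρ⟩ := hD.subset_ball_lt 0 (0 : E)
  let Q : Finset E → Prop := fun t => (∀ p ∈ t, p ∈ D) ∧ (∀ p ∈ t, ∀ q ∈ t, p ≠ q → s ≤ dist p q)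
  let K : Set ℕ := {n | ∃ t, Q t ∧ t.card = n}
  have hne : K.Nonempty := ⟨0, ∅, ⟨by simp, by simp⟩, rfl⟩
  have hbd : BddAbove K := by
    refine ⟨⌈((2 * ρ + s) / s) ^ Module.finrank ℝ E⌉₊, ?_⟩
    rintro _ ⟨t, ht, rfl⟩
    have := packing_card μ t s ρ hs hρ 0 (fun p hp => hDρ (ht.1 p hp)) ht.2
    exact_mod_cast this.trans (Nat.le_ceil _)
  obtain ⟨t, ht, hc⟩ := Nat.sSup_mem hne hbd
  refine ⟨t, ht.1, ht.2, fun x hx => ?_⟩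
  by_contra hcon
  push Not at hcon
  have hxt : x ∉ t := fun h => by have := hcon x h; simp at this; linarith
  have hQ : Q (insert x t) := by
    refine ⟨?_, ?_⟩
    · intro p hp
      rcases Finset.mem_insert.1 hp with rfl | hp
      · exact hx
      · exact ht.1 p hp
    · intro p hp q hq hpq
      rcases Finset.mem_insert.1 hp with hp1 | hp1 <;> rcases Finset.mem_insert.1 hq with hq1 | hq1
      · exact absurd (hp1.trans hq1.symm) hpq
      · rw [hp1]; exact hcon q hq1
      · rw [hq1, dist_comm]; exact hcon p hp1
      · exact ht.2 p hp1 q hq1 hpq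
  have := le_csSup hbd (show (insert x t).card ∈ K from ⟨_, hQ, rfl⟩)
  rw [Finset.card_insert_of_notMem hxt, ← hc] at this
  omega

lemma overlap_bound (μ : Measure E) [μ.IsAddHaarMeasure] [Nontrivial E] (t : Finset E) (ε : ℝ)
    (hε : 0 < ε) (hsep : ∀ p ∈ t, ∀ q ∈ t, p ≠ q → ε / 2 ≤ dist p q)
    (F : E → ℝ) (hF : Integrable F μ) (hF0 : ∀ y, 0 ≤ F y) :
    ∑ p ∈ t, ∫ y in ball p (2 * ε), F y ∂μ ≤ 9 ^ Module.finrank ℝ E * ∫ y, F y ∂μ := by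
  classical
  have h1 : ∀ p ∈ t, ∫ y in ball p (2 * ε), F y ∂μ = ∫ y, (ball p (2 * ε)).indicator F y ∂μ :=
    fun p _ => (integral_indicator measurableSet_ball).symm
  rw [Finset.sum_congr rfl h1, ← integral_finsetSum _ (fun p _ => hF.indicator measurableSet_ball),
    ← integral_const_mul]
  refine integral_mono (integrable_finsetSum _ fun p _ => hF.indicator measurableSet_ball)
    (hF.const_mul _) fun y => ?_
  have h2 : ∑ p ∈ t, (ball p (2 * ε)).indicator F y = ((t.filter fun p => dist p y < 2 * ε).card : ℝ) * F y := by
    rw [← nsmul_eq_mul, ← Finset.sum_const, Finset.sum_filter]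
    refine Finset.sum_congr rfl fun p _ => ?_
    simp [Set.indicator, mem_ball, dist_comm]
  simp only
  rw [h2]
  refine mul_le_mul_of_nonneg_right ?_ (hF0 y)
  have := packing_card μ (t.filter fun p => dist p y < 2 * ε) (ε / 2) (2 * ε) (by positivity) (by positivity) y
    (fun p hp => (Finset.mem_filter.1 hp).2)
    (fun p hp q hq => hsep p (Finset.mem_filter.1 hp).1 q (Finset.mem_filter.1 hq).1)
  have e : (2 * (2 * ε) + ε / 2) / (ε / 2) = 9 := by field_simp; norm_num
  rwa [e] at this

lemma average_le_root (μ : Measure E) [μ.IsAddHaarMeasure] [Nontrivial E]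
    (f : E → ℝ) (hf : Measurable f) (M : ℝ) (hM : ∀ y, |f y| ≤ M) (hf0 : ∀ y, 0 ≤ f y)
    (x p : E) (ε : ℝ) (hε : 0 < ε) (hxp : dist x p < ε / 2) :
    ⨍ y in ball x ε, f y ∂μ ≤ ((ε ^ Module.finrank ℝ E * μ.real (ball 0 1))⁻¹ *
      ∫ y in ball p (2 * ε), f y ^ Module.finrank ℝ E ∂μ) ^ ((Module.finrank ℝ E : ℝ)⁻¹) := by
  set d := Module.finrank ℝ E with hd
  have hd0 : d ≠ 0 := Module.finrank_pos.ne'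
  have hfin : ∀ z r, μ (ball z r) ≠ ∞ := fun z r => measure_ball_lt_top.ne
  have hi : ∀ z r, IntegrableOn f (ball z r) μ := fun z r =>
    Measure.integrableOn_of_bounded (hfin z r) hf.aestronglyMeasurable (M := M)
      (Filter.Eventually.of_forall fun y => by simpa using hM y)
  have hid : ∀ z r, IntegrableOn (fun y => f y ^ d) (ball z r) μ := fun z r =>
    Measure.integrableOn_of_bounded (hfin z r) (hf.pow_const d).aestronglyMeasurable (M := M ^ d)
      (Filter.Eventually.of_forall fun y => by
        rw [Real.norm_eq_abs, abs_pow]; exact pow_le_pow_left₀ (abs_nonneg _) (hM y) _)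
  have : IsFiniteMeasure (μ.restrict (ball x ε)) := ⟨by simpa using measure_ball_lt_top⟩
  have : NeZero (μ.restrict (ball x ε)) := ⟨by
    rw [Ne, Measure.restrict_eq_zero]; exact (measure_ball_pos μ _ hε).ne'⟩
  have hJ : (⨍ y in ball x ε, f y ∂μ) ^ d ≤ ⨍ y in ball x ε, f y ^ d ∂μ :=
    ConvexOn.map_average_le (g := fun s : ℝ => s ^ d) (convexOn_pow d) (by fun_prop) isClosed_Ici
      (Filter.Eventually.of_forall fun y => hf0 y) (hi x ε) (hid x ε)
  have hvol : μ.real (ball x ε) = ε ^ d * μ.real (ball 0 1) := by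
    simp only [measureReal_def]
    rw [Measure.addHaar_ball μ x hε.le, ENNReal.toReal_mul, ENNReal.toReal_ofReal (by positivity)]
  have h0 : 0 ≤ ⨍ y in ball x ε, f y ∂μ := by
    rw [setAverage_eq, smul_eq_mul]
    exact mul_nonneg (by positivity) (integral_nonneg hf0)
  rw [← Real.pow_rpow_inv_natCast h0 hd0]
  refine Real.rpow_le_rpow (by positivity) (hJ.trans ?_) (by positivity)
  rw [setAverage_eq, smul_eq_mul, hvol]
  refine mul_le_mul_of_nonneg_left ?_ (by positivity)
  refine setIntegral_mono_set (hid _ _) (Filter.Eventually.of_forall fun y => pow_nonneg (hf0 y) _) ?_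
  exact Filter.Eventually.of_forall (ball_subset_ball' (by linarith))

lemma supersolution_exists (μ : Measure E) [μ.IsAddHaarMeasure] [Nontrivial E]
    (D : Set E) (hD : Bornology.IsBounded D) (x₀ : E) (hx₀ : x₀ ∈ D)
    (f : E → ℝ) (hf : Measurable f) (M : ℝ) (hM : ∀ y, |f y| ≤ M) (hf0 : ∀ y, 0 ≤ f y)
    (hfD : ∀ y ∉ D, f y = 0) (Λ ε : ℝ) (hΛ : 1 ≤ Λ) (hε : 0 < ε) :
    ∃ V : E → ℝ, Measurable V ∧ (∀ x, 0 ≤ V x) ∧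
      (∀ x, V x ≤ 288 * 8 ^ Module.finrank ℝ E *
        ((μ.real (ball (0 : E) 1))⁻¹) ^ ((Module.finrank ℝ E : ℝ)⁻¹) * (diam D + Λ * ε) *
        (∫ y in D, f y ^ Module.finrank ℝ E ∂μ) ^ ((Module.finrank ℝ E : ℝ)⁻¹)) ∧
      ∀ x ∈ D, ∀ η > 0, ∃ k : E,
        (∀ z, ‖z‖ ≤ Λ → V (x + ε • z) ≤ V x + η + ε * inner ℝ k z) ∧
        ⨍ y in ball x ε, V y ∂μ ≤ V x + η - ε ^ 2 * ⨍ y in ball x ε, f y ∂μ := by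
  set d := Module.finrank ℝ E with hd
  have hd0 : d ≠ 0 := Module.finrank_pos.ne'
  set κ := μ.real (ball (0 : E) 1) with hκ
  have hκ0 : 0 < κ := ENNReal.toReal_pos (measure_ball_pos μ _ one_pos).ne' measure_ball_lt_top.ne
  obtain ⟨t, htD, hsep, hcov⟩ := net_exists μ D hD (ε / 2) (by positivity)
  set R := diam D + Λ * ε with hR
  have hΛε : ε ≤ Λ * ε := by nlinarith
  have hdiam : 0 ≤ diam D := diam_nonneg
  have hR0 : 0 < R := by linarith
  have hdist : ∀ x ∈ D, ‖x - x₀‖ ≤ diam D := fun x hx => by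
    rw [← dist_eq_norm]; exact dist_le_diam_of_mem hD hx hx₀
  -- integrability of the power
  have hid : IntegrableOn (fun y => f y ^ d) D μ :=
    Measure.integrableOn_of_bounded hD.measure_lt_top.ne (hf.pow_const d).aestronglyMeasurable
      (M := M ^ d) (Filter.Eventually.of_forall fun y => by
        rw [Real.norm_eq_abs, abs_pow]; exact pow_le_pow_left₀ (abs_nonneg _) (hM y) _)
  have hz : ∀ y ∉ D, f y ^ d = 0 := fun y hy => by rw [hfD y hy, zero_pow hd0]
  have hint : Integrable (fun y => f y ^ d) μ :=
    (integrableOn_iff_integrable_of_support_subset (fun y hy => by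
      by_contra h; exact hy (hz y h))).1 hid
  have hIeq : ∫ y in D, f y ^ d ∂μ = ∫ y, f y ^ d ∂μ :=
    setIntegral_eq_integral_of_forall_compl_eq_zero hz
  set I := ∫ y in D, f y ^ d ∂μ with hI
  have hI0 : 0 ≤ I := by rw [hIeq]; exact integral_nonneg fun y => pow_nonneg (hf0 y) _
  let J : E → ℝ := fun p => (ε ^ d * κ)⁻¹ * ∫ y in ball p (2 * ε), f y ^ d ∂μ
  have hJ0 : ∀ p, 0 ≤ J p := fun p =>
    mul_nonneg (by positivity) (integral_nonneg fun y => pow_nonneg (hf0 y) _)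
  let r : t → ℝ := fun p => 16 * 8 ^ d * ε * (J p) ^ ((d : ℝ)⁻¹)
  have hr : ∀ i, 0 ≤ r i := fun i => by
    have := Real.rpow_nonneg (hJ0 i) ((d : ℝ)⁻¹)
    simp only [r]; positivity
  have hrsum : ∑ i, r i ^ d ≤ (16 * 8 ^ d * 9) ^ d * (κ⁻¹ * I) := by
    have h1 : ∀ i : t, r i ^ d = (16 * 8 ^ d) ^ d * κ⁻¹ * ∫ y in ball (i : E) (2 * ε), f y ^ d ∂μ := by
      intro i
      simp only [r]
      rw [mul_pow, mul_pow, Real.rpow_inv_natCast_pow (hJ0 i) hd0]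
      simp only [J]
      field_simp
    simp only [h1]
    rw [← Finset.mul_sum, Finset.sum_coe_sort t (fun p => ∫ y in ball p (2 * ε), f y ^ d ∂μ)]
    have h2 := overlap_bound μ t ε hε hsep (fun y => f y ^ d) hint (fun y => pow_nonneg (hf0 y) _)
    rw [← hIeq] at h2
    calc (16 * 8 ^ d) ^ d * κ⁻¹ * _ ≤ (16 * 8 ^ d) ^ d * κ⁻¹ * (9 ^ d * I) := by gcongr
      _ = _ := by rw [mul_pow (16 * 8 ^ d) 9]; ring
  obtain ⟨V, hVm, hV0, hVB, hV⟩ := barrier_exists μ (fun p : t => (p : E) - x₀)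
    (fun p q h => Subtype.ext (sub_left_injective h)) R hR0
    (fun p => by have := hdist p (htD p p.2); linarith) r hr
  rw [← hd] at hVB
  set B := 2 * R * (∑ i, r i ^ d) ^ ((d : ℝ)⁻¹) with hB
  have hsum : 0 ≤ ∑ i, r i ^ d := Finset.sum_nonneg fun j _ => pow_nonneg (hr j) _
  have hBle : B ≤ 288 * 8 ^ d * (κ⁻¹) ^ ((d : ℝ)⁻¹) * R * I ^ ((d : ℝ)⁻¹) := by
    have h1 : (∑ i, r i ^ d) ^ ((d : ℝ)⁻¹) ≤ ((16 * 8 ^ d * 9) ^ d * (κ⁻¹ * I)) ^ ((d : ℝ)⁻¹) :=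
      Real.rpow_le_rpow hsum hrsum (by positivity)
    rw [Real.mul_rpow (by positivity) (by positivity), Real.pow_rpow_inv_natCast (by positivity) hd0,
      Real.mul_rpow (by positivity) hI0] at h1
    calc B ≤ 2 * R * (16 * 8 ^ d * 9 * (κ⁻¹ ^ ((d : ℝ)⁻¹) * I ^ ((d : ℝ)⁻¹))) := by
          rw [hB]; gcongr
      _ = _ := by ring
  refine ⟨fun y => V (y - x₀), by fun_prop, fun x => hV0 _, fun x => (hVB _).trans hBle, ?_⟩
  intro x hx η hη
  have hxd := hdist x hx
  obtain ⟨k, hk1, hk2⟩ := hV (x - x₀) (by linarith) η hη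
  refine ⟨k, fun z hzΛ => ?_, ?_⟩
  · have h1 : ‖x + ε • z - x₀‖ ≤ R := by
      calc ‖x + ε • z - x₀‖ = ‖(x - x₀) + ε • z‖ := by congr 1; abel
        _ ≤ _ := norm_add_le _ _
        _ ≤ diam D + Λ * ε := by
          rw [norm_smul, Real.norm_of_nonneg hε.le, mul_comm Λ]; gcongr
    have h2 := hk1 _ h1
    have h3 : x + ε • z - x₀ - (x - x₀) = ε • z := by abel
    rwa [h3, inner_smul_right] at h2
  · obtain ⟨p, hpt, hxp⟩ := hcov x hx
    have hballsub : ball (x - x₀) ε ⊆ closedBall 0 R := by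
      refine ball_subset_closedBall.trans (closedBall_subset_closedBall' ?_)
      rw [dist_zero_right]; linarith
    obtain ⟨w, hw1, hw2⟩ := hk2 ⟨p, hpt⟩ ε hε (by
      simp only [sub_sub_sub_cancel_right]; rw [← dist_eq_norm]; exact hxp.le) hballsub
    have hshift : ∀ y, y - x₀ - (x - x₀) = y - x := fun y => by abel
    have hdrop := ball_average_drop μ (fun y => V (y - x₀)) (by fun_prop) B
      (fun y => by rw [abs_of_nonneg (hV0 _)]; exact hVB _) x k (w + x₀) ε (V (x - x₀) + η)
      (r ⟨p, hpt⟩ / 2 * (ε / 8)) hε ?_ ?_ ?_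
    · refine hdrop.trans ?_
      have h1 := average_le_root μ f hf M hM hf0 x p ε hε hxp
      rw [← hd] at h1 ⊢
      have h2 : r ⟨p, hpt⟩ / 2 * (ε / 8) * (1 / 8) ^ d = ε ^ 2 * J p ^ ((d : ℝ)⁻¹) := by
        simp only [r]
        rw [div_pow, one_pow]
        field_simp
        ring
      rw [h2]
      have h3 : ε ^ 2 * ⨍ y in ball x ε, f y ∂μ ≤ ε ^ 2 * J p ^ ((d : ℝ)⁻¹) := by gcongr
      linarith
    · intro y hy
      have : y - x₀ ∈ ball w (ε / 8) := by
        rw [mem_ball, dist_eq_norm] at hy ⊢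
        rwa [show y - x₀ - w = y - (w + x₀) by abel]
      have := hw1 this
      rw [mem_ball, dist_eq_norm, hshift] at this
      rwa [mem_ball, dist_eq_norm]
    · intro y hy
      have : y - x₀ ∈ ball (x - x₀) ε := by
        rw [mem_ball, dist_eq_norm] at hy ⊢
        rwa [hshift]
      have := hk1 _ (mem_closedBall_zero_iff.1 (hballsub this))
      rwa [hshift] at this
    · intro y hy
      have : y - x₀ ∈ ball w (ε / 8) := by
        rw [mem_ball, dist_eq_norm] at hy ⊢
        rwa [show y - x₀ - w = y - (w + x₀) by abel]
      have := hw2 _ this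
      rwa [hshift] at this

lemma one_step (μ : Measure E) [μ.IsAddHaarMeasure] (ν : Measure E) [IsProbabilityMeasure ν]
    (Λ ε β S B : ℝ) (hε : 0 < ε) (hβ : β ∈ Set.Ioc (0 : ℝ) 1)
    (hsupp : ν (closedBall (0 : E) Λ)ᶜ = 0)
    (hsymm : ∀ A : Set E, MeasurableSet A → ν A = ν (-A))
    (f V : E → ℝ) (hf : Measurable f) (hf0 : ∀ y, 0 ≤ f y) (hfS : ∀ y, f y ≤ S)
    (hV : Measurable V) (hV0 : ∀ y, 0 ≤ V y) (hVB : ∀ y, V y ≤ B) (x : E)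
    (h : ∀ η > 0, ∃ k : E,
        (∀ z, ‖z‖ ≤ Λ → V (x + ε • z) ≤ V x + η + ε * inner ℝ k z) ∧
        ⨍ y in ball x ε, V y ∂μ ≤ V x + η - ε ^ 2 * ⨍ y in ball x ε, f y ∂μ) :
    (1 - β) * ∫ z, (V (x + ε • z) + ε ^ 2 * f (x + ε • z)) ∂ν +
      β * ⨍ y in ball x ε, (V y + ε ^ 2 * f y) ∂μ ≤ V x + ε ^ 2 * ((1 - β) * S) := by
  refine le_of_forall_pos_le_add fun η hη => ?_
  obtain ⟨k, hk1, hk2⟩ := h η hη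
  have hae : ∀ᵐ z ∂ν, ‖z‖ ≤ Λ := by
    rw [ae_iff]
    convert hsupp using 2
    ext z; simp
  have hneg : ν.IsNegInvariant := ⟨by
    ext A hA
    rw [Measure.neg_apply]
    exact (hsymm A hA).symm⟩
  have hodd : ∫ z, (inner ℝ k z : ℝ) ∂ν = 0 := by
    have h2 := integral_neg_eq_self (fun z => (inner ℝ k z : ℝ)) ν
    simp only [inner_neg_right, integral_neg] at h2
    linarith
  have hki : Integrable (fun z => (inner ℝ k z : ℝ)) ν := by
    refine Integrable.of_bound (Continuous.aestronglyMeasurable (by fun_prop)) (‖k‖ * Λ) ?_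
    filter_upwards [hae] with z hz
    exact (norm_inner_le_norm k z).trans (by gcongr)
  have hVi : Integrable (fun z => V (x + ε • z)) ν := by
    refine Integrable.of_bound (Measurable.aestronglyMeasurable (by fun_prop)) B ?_
    exact Filter.Eventually.of_forall fun z => by
      rw [Real.norm_of_nonneg (hV0 _)]; exact hVB _
  have hfi : Integrable (fun z => f (x + ε • z)) ν := by
    refine Integrable.of_bound (Measurable.aestronglyMeasurable (by fun_prop)) S ?_
    exact Filter.Eventually.of_forall fun z => by
      rw [Real.norm_of_nonneg (hf0 _)]; exact hfS _
  have hVb : IntegrableOn V (ball x ε) μ :=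
    Measure.integrableOn_of_bounded measure_ball_lt_top.ne hV.aestronglyMeasurable (M := B)
      (Filter.Eventually.of_forall fun z => by rw [Real.norm_of_nonneg (hV0 _)]; exact hVB _)
  have hfb : IntegrableOn f (ball x ε) μ :=
    Measure.integrableOn_of_bounded measure_ball_lt_top.ne hf.aestronglyMeasurable (M := S)
      (Filter.Eventually.of_forall fun z => by rw [Real.norm_of_nonneg (hf0 _)]; exact hfS _)
  have e1 : ∫ z, (V (x + ε • z) + ε ^ 2 * f (x + ε • z)) ∂ν ≤ V x + η + ε ^ 2 * S := by
    rw [integral_add hVi (hfi.const_mul _), integral_const_mul]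
    have a1 : ∫ z, V (x + ε • z) ∂ν ≤ ∫ z, (V x + η + ε * inner ℝ k z) ∂ν :=
      integral_mono_ae hVi ((integrable_const _).add (hki.const_mul _)) (by
        filter_upwards [hae] with z hz using hk1 z hz)
    rw [integral_add (integrable_const _) (hki.const_mul _), integral_const_mul, hodd] at a1
    have a2 : ∫ z, f (x + ε • z) ∂ν ≤ ∫ z, S ∂ν :=
      integral_mono hfi (integrable_const _) fun z => hfS _
    simp at a1 a2
    have : ε ^ 2 * ∫ z, f (x + ε • z) ∂ν ≤ ε ^ 2 * S := by gcongr
    linarith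
  have e2 : ⨍ y in ball x ε, (V y + ε ^ 2 * f y) ∂μ ≤ V x + η := by
    have : ⨍ y in ball x ε, (V y + ε ^ 2 * f y) ∂μ =
        ⨍ y in ball x ε, V y ∂μ + ε ^ 2 * ⨍ y in ball x ε, f y ∂μ := by
      simp only [setAverage_eq, smul_eq_mul]
      rw [integral_add hVb (hfb.const_mul _), integral_const_mul]
      ring
    linarith
  have b1 := mul_le_mul_of_nonneg_left e1 (show 0 ≤ 1 - β by linarith [hβ.2])
  have b2 := mul_le_mul_of_nonneg_left e2 hβ.1.le
  linarith

end ABP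

/-- `ε`-ABP estimate with bounded measurable right-hand side, in
expectation form: `E[ε² Σ_{i<τ} f(X_i)] ≤ (ε² + α E[ε²τ]) sup f + C (diam Ω + Λε) ‖f‖_N`,
with `C` depending only on `N`. -/
theorem eps_ABP_measurable (N : ℕ) (hN : 1 ≤ N) :
    ∃ C : ℝ, 0 < C ∧
      ∀ Λ β ε : ℝ, 1 ≤ Λ → β ∈ Set.Ioc (0 : ℝ) 1 → 0 < ε →
      ∀ (ν : EuclideanSpace ℝ (Fin N) → Measure (EuclideanSpace ℝ (Fin N))),
        (∀ x, IsProbabilityMeasure (ν x)) →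
        (∀ x, ν x (closedBall (0 : EuclideanSpace ℝ (Fin N)) Λ)ᶜ = 0) →
        (∀ x (E : Set (EuclideanSpace ℝ (Fin N))), MeasurableSet E → ν x E = ν x (-E)) →
        (∀ w : EuclideanSpace ℝ (Fin N) → ℝ, Measurable w → (∃ M, ∀ y, |w y| ≤ M) →
          Measurable fun x => ∫ z, w (x + z) ∂ν x) →
      ∀ (D : Set (EuclideanSpace ℝ (Fin N))), IsOpen D → IsConnected D →
        Bornology.IsBounded D →
      ∀ x₀ ∈ D,
      ∀ f : EuclideanSpace ℝ (Fin N) → ℝ, Measurable f → (∃ M, ∀ y, |f y| ≤ M) →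
        (∀ y, 0 ≤ f y) → (∀ y ∉ D, f y = 0) →
      ∀ (Ωhat : Type) [m0 : MeasurableSpace Ωhat] (μ : Measure Ωhat),
        IsProbabilityMeasure μ →
      ∀ (𝔉 : Filtration ℕ m0) (X : ℕ → Ωhat → EuclideanSpace ℝ (Fin N)),
        Adapted 𝔉 X → (∀ᵐ ω ∂μ, X 0 ω = x₀) →
        (∀ (k : ℕ) (g : EuclideanSpace ℝ (Fin N) → ℝ), Measurable g →
          (∃ M, ∀ y, |g y| ≤ M) →
          (μ[(fun ω => g (X (k + 1) ω)) | 𝔉 k]) =ᵐ[μ]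
            fun ω => (1 - β) * ∫ z, g (X k ω + ε • z) ∂ν (X k ω) +
              β * ⨍ y in ball (X k ω) ε, g y) →
        ENNReal.ofReal (ε ^ 2) *
            ∫⁻ ω, (∑' i : ℕ,
              Set.indicator {ω' | ∀ j ≤ i, X j ω' ∈ D}
                (fun ω' => ENNReal.ofReal (f (X i ω'))) ω) ∂μ ≤
          (ENNReal.ofReal (ε ^ 2) +
              ENNReal.ofReal (1 - β) *
                (ENNReal.ofReal (ε ^ 2) *
                  ∫⁻ ω, (⨅ (k : ℕ) (_ : X k ω ∉ D), (k : ℝ≥0∞)) ∂μ)) *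
            ENNReal.ofReal (sSup (f '' D)) +
          ENNReal.ofReal (C * (diam D + Λ * ε)) *
            ENNReal.ofReal ((∫ y in D, f y ^ N) ^ ((1 : ℝ) / N)) := by
  have hfr : Module.finrank ℝ (EuclideanSpace ℝ (Fin N)) = N := by simp
  have hnt : Nontrivial (EuclideanSpace ℝ (Fin N)) :=
    Module.nontrivial_of_finrank_pos (R := ℝ) (by rw [hfr]; exact hN)
  set κ := (volume : Measure (EuclideanSpace ℝ (Fin N))).real (ball 0 1) with hκ
  have hκ0 : 0 < κ :=
    ENNReal.toReal_pos (measure_ball_pos volume _ one_pos).ne' measure_ball_lt_top.ne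
  refine ⟨288 * 8 ^ N * (κ⁻¹) ^ ((N : ℝ)⁻¹), by positivity, ?_⟩
  intro Λ β ε hΛ hβ hε ν hν hsupp hsymm _ D hDo _ hDb x₀ hx₀ f hf hfM hf0 hfD Ωhat m0 μ hμ 𝔉 X hX hX0 hstep
  obtain ⟨M, hM⟩ := hfM
  set S := sSup (f '' D) with hS
  have hSbd : BddAbove (f '' D) := by
    refine ⟨M, ?_⟩
    rintro _ ⟨y, _, rfl⟩
    exact (le_abs_self _).trans (hM y)
  have hS0 : 0 ≤ S := (hf0 x₀).trans (le_csSup hSbd ⟨x₀, hx₀, rfl⟩)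
  have hfS : ∀ y, f y ≤ S := by
    intro y
    by_cases hy : y ∈ D
    · exact le_csSup hSbd ⟨y, hy, rfl⟩
    · rw [hfD y hy]; exact hS0
  obtain ⟨V, hVm, hV0, hVB, hV⟩ := supersolution_exists volume D hDb x₀ hx₀ f hf M hM hf0 hfD Λ ε hΛ hε
  rw [hfr, ← hκ] at hVB
  set I := (∫ y in D, f y ^ N) ^ ((N : ℝ)⁻¹) with hI
  have hI0 : 0 ≤ I := Real.rpow_nonneg (integral_nonneg fun y => pow_nonneg (hf0 y) _) _
  set K := 288 * 8 ^ N * (κ⁻¹) ^ ((N : ℝ)⁻¹) * (diam D + Λ * ε) with hK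
  have hK0 : 0 ≤ K := by
    have : 0 ≤ diam D := diam_nonneg
    have : 0 ≤ Λ := by linarith
    positivity
  have hX' : ∀ i, Measurable (X i) := fun i => (hX i).mono (𝔉.le i) le_rfl
  let A : ℕ → Set Ωhat := fun i => {ω | ∀ j ≤ i, X j ω ∈ D}
  have hA : ∀ i, MeasurableSet[𝔉 i] (A i) := by
    intro i
    have : A i = ⋂ j, ⋂ (_ : j ≤ i), X j ⁻¹' D := by
      ext ω; simp [A]
    rw [this]
    refine MeasurableSet.iInter fun j => MeasurableSet.iInter fun hj => ?_
    exact 𝔉.mono hj _ (hX j hDo.measurableSet)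
  have hA' : ∀ i, MeasurableSet (A i) := fun i => 𝔉.le i _ (hA i)
  have hAD : ∀ i ω, ω ∈ A i → X i ω ∈ D := fun i ω h => h i le_rfl
  have hAanti : ∀ i, A (i + 1) ⊆ A i := fun i ω h j hj => h j (by omega)
  let g : EuclideanSpace ℝ (Fin N) → ℝ := fun y => V y + ε ^ 2 * f y
  have hg : Measurable g := by fun_prop
  have hg0 : ∀ y, 0 ≤ g y := fun y => by
    have := hV0 y; have := hf0 y; simp only [g]; positivity
  have hgB : ∀ y, g y ≤ K * I + ε ^ 2 * S := fun y => by
    have h1 := hVB y; have h2 := hfS y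
    simp only [g]; gcongr
  have hint : ∀ (φ : EuclideanSpace ℝ (Fin N) → ℝ) (C : ℝ), Measurable φ → (∀ y, 0 ≤ φ y) →
      (∀ y, φ y ≤ C) → ∀ i, Integrable (fun ω => φ (X i ω)) μ := by
    intro φ C hφ h0 hC i
    refine Integrable.of_bound (hφ.comp (hX' i)).aestronglyMeasurable C ?_
    exact Filter.Eventually.of_forall fun ω => by rw [Real.norm_of_nonneg (h0 _)]; exact hC _
  have hgi := hint g _ hg hg0 hgB
  have hVi := hint V _ hVm hV0 hVB
  have hfi := hint f _ hf hf0 hfS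
  let e : ℕ → ℝ := fun i => ∫ ω in A i, f (X i ω) ∂μ
  let w : ℕ → ℝ := fun i => ∫ ω in A i, g (X i ω) ∂μ
  have he0 : ∀ i, 0 ≤ e i := fun i => integral_nonneg fun ω => hf0 _
  have hw0 : ∀ i, 0 ≤ w i := fun i => integral_nonneg fun ω => hg0 _
  have hrec : ∀ i, w (i + 1) + ε ^ 2 * e i ≤ w i + ε ^ 2 * ((1 - β) * S) * μ.real (A i) := by
    intro i
    have h1 : w (i + 1) ≤ ∫ ω in A i, g (X (i + 1) ω) ∂μ :=
      setIntegral_mono_set (hgi (i + 1)).integrableOn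
        (Filter.Eventually.of_forall fun ω => hg0 _)
        (Filter.Eventually.of_forall (hAanti i))
    have hc := hstep i g hg ⟨_, fun y => by rw [abs_of_nonneg (hg0 y)]; exact hgB y⟩
    have h2 : ∫ ω in A i, g (X (i + 1) ω) ∂μ ≤
        ∫ ω in A i, (V (X i ω) + ε ^ 2 * ((1 - β) * S)) ∂μ := by
      rw [← setIntegral_condExp (𝔉.le i) (hgi (i + 1)) (hA i)]
      refine setIntegral_mono_on_ae integrable_condExp.integrableOn
        ((hVi i).add (integrable_const _)).integrableOn (hA' i) ?_
      filter_upwards [hc] with ω hω hωA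
      rw [hω]
      have := hν (X i ω)
      exact one_step volume (ν (X i ω)) Λ ε β S (K * I) hε hβ (hsupp _) (hsymm _) f V hf hf0 hfS
        hVm hV0 hVB (X i ω) (hV _ (hAD i ω hωA))
    rw [integral_add (hVi i).integrableOn (integrable_const _), setIntegral_const, smul_eq_mul] at h2
    have h3 : w i = ∫ ω in A i, V (X i ω) ∂μ + ε ^ 2 * e i := by
      simp only [w, e, g]
      rw [integral_add (hVi i).integrableOn ((hfi i).const_mul _).integrableOn, integral_const_mul]
    linarith
  have hsum : ∀ n, w n + ε ^ 2 * ∑ i ∈ Finset.range n, e i ≤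
      w 0 + ε ^ 2 * ((1 - β) * S) * ∑ i ∈ Finset.range n, μ.real (A i) := by
    intro n
    induction n with
    | zero => simp
    | succ n ih =>
      rw [Finset.sum_range_succ, Finset.sum_range_succ]
      have := hrec n
      linarith
  have hw0B : w 0 ≤ K * I + ε ^ 2 * S := by
    have h1 : w 0 ≤ ∫ ω in A 0, (K * I + ε ^ 2 * S) ∂μ :=
      setIntegral_mono (hgi 0).integrableOn (integrable_const _).integrableOn fun ω => hgB _
    rw [setIntegral_const, smul_eq_mul] at h1
    refine h1.trans (mul_le_of_le_one_left (by positivity) measureReal_le_one)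
  have hβ1 : 0 ≤ 1 - β := by linarith [hβ.2]
  have htau : ∑' i, μ (A i) ≤ ∫⁻ ω, (⨅ (k : ℕ) (_ : X k ω ∉ D), (k : ℝ≥0∞)) ∂μ := by
    have h1 : ∑' i, μ (A i) = ∫⁻ ω, ∑' i, (A i).indicator (fun _ => (1 : ℝ≥0∞)) ω ∂μ := by
      rw [lintegral_tsum fun i => (measurable_const.indicator (hA' i)).aemeasurable]
      refine tsum_congr fun i => ?_
      rw [lintegral_indicator (hA' i)]; simp
    rw [h1]
    refine lintegral_mono fun ω => le_iInf₂ fun k hk => ?_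
    rw [tsum_eq_sum (s := Finset.range k)]
    · calc ∑ i ∈ Finset.range k, (A i).indicator (fun _ => (1 : ℝ≥0∞)) ω
          ≤ ∑ i ∈ Finset.range k, (1 : ℝ≥0∞) := by
            refine Finset.sum_le_sum fun i _ => ?_
            by_cases h : ω ∈ A i <;> simp [h]
        _ = k := by simp
    · intro i hi
      have hki : k ≤ i := by simpa using hi
      have hn : ω ∉ A i := fun h => hk (h k hki)
      exact Set.indicator_of_notMem hn _
  have hLHS : ∫⁻ ω, (∑' i : ℕ, Set.indicator {ω' | ∀ j ≤ i, X j ω' ∈ D}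
      (fun ω' => ENNReal.ofReal (f (X i ω'))) ω) ∂μ = ∑' i, ENNReal.ofReal (e i) := by
    change ∫⁻ ω, (∑' i : ℕ, (A i).indicator
      (fun ω' => ENNReal.ofReal ((f ∘ X i) ω')) ω) ∂μ = _
    rw [lintegral_tsum fun i => ((hf.comp (hX' i)).ennreal_ofReal.indicator (hA' i)).aemeasurable]
    refine tsum_congr fun i => ?_
    rw [lintegral_indicator (hA' i)]
    exact (ofReal_integral_eq_lintegral_ofReal (hfi i).integrableOn
      (Filter.Eventually.of_forall fun ω => hf0 _)).symm
  rw [hLHS, one_div, ← hI, ← ENNReal.tsum_mul_left, ← ENNReal.ofReal_mul hK0]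
  refine ENNReal.tsum_le_of_sum_range_le fun n => ?_
  have hreal : ε ^ 2 * ∑ i ∈ Finset.range n, e i ≤
      (ε ^ 2 + (1 - β) * (ε ^ 2 * ∑ i ∈ Finset.range n, μ.real (A i))) * S + K * I := by
    have := hsum n
    have := hw0 n
    linarith
  have hps : 0 ≤ ∑ i ∈ Finset.range n, μ.real (A i) := Finset.sum_nonneg fun _ _ => measureReal_nonneg
  calc ∑ i ∈ Finset.range n, ENNReal.ofReal (ε ^ 2) * ENNReal.ofReal (e i)
      = ENNReal.ofReal (ε ^ 2 * ∑ i ∈ Finset.range n, e i) := by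
        rw [← Finset.mul_sum, ← ENNReal.ofReal_sum_of_nonneg (fun i _ => he0 i),
          ENNReal.ofReal_mul (by positivity)]
    _ ≤ ENNReal.ofReal ((ε ^ 2 + (1 - β) * (ε ^ 2 * ∑ i ∈ Finset.range n, μ.real (A i))) * S + K * I) :=
        ENNReal.ofReal_le_ofReal hreal
    _ = (ENNReal.ofReal (ε ^ 2) + ENNReal.ofReal (1 - β) * (ENNReal.ofReal (ε ^ 2) *
          ∑ i ∈ Finset.range n, μ (A i))) * ENNReal.ofReal S + ENNReal.ofReal (K * I) := by
        rw [ENNReal.ofReal_add (by positivity) (by positivity), ENNReal.ofReal_mul (by positivity),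
          ENNReal.ofReal_add (by positivity) (by positivity), ENNReal.ofReal_mul hβ1,
          ENNReal.ofReal_mul (by positivity),
          ENNReal.ofReal_sum_of_nonneg (fun i _ => measureReal_nonneg)]
        have hmr : ∀ i, ENNReal.ofReal (μ.real (A i)) = μ (A i) := fun i =>
          ENNReal.ofReal_toReal (measure_ne_top μ _)
        rw [Finset.sum_congr rfl fun i _ => hmr i]
    _ ≤ _ := by
        gcongr
        exact (ENNReal.sum_le_tsum _).trans htau
end
end

section
/- Let Q₁ ⊂ ℝ^N be an open cube of side length 1, let A ⊆ Q₁ be Lebesgue measurable, let 0 < δ̃ < δ < 1 with |A| ≤ δ, and let L ∈ ℕ. Then there exists a finite family 𝒬_B of pairwise disjoint open dyadic subcubes of Q₁, each of generation at most L, such that: (i) |A ∩ Q| ≤ δ|Q| for every Q ∈ 𝒬_B; (ii) every Q ∈ 𝒬_B either contains a dyadic subcube Q' of the next generation with |A ∩ Q'| > δ|Q'|, or has generation exactly L and satisfies |A ∩ Q| > δ̃|Q|; and (iii) |A| ≤ δ|B| + δ̃, where B is the union of the cubes in 𝒬_B. -/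
open MeasureTheory Metric
open scoped ENNReal

noncomputable section

/-- The open dyadic subcube of generation `ℓ` with index `m ∈ {0,…,2^ℓ−1}ᴺ` of the open
unit cube with lower corner `b`. -/
def dyadicCube (N : ℕ) (b : EuclideanSpace ℝ (Fin N)) (ℓ : ℕ) (m : Fin N → ℕ) :
    Set (EuclideanSpace ℝ (Fin N)) :=
  {x | ∀ i, b i + (m i : ℝ) / 2 ^ ℓ < x i ∧ x i < b i + ((m i : ℝ) + 1) / 2 ^ ℓ}

theorem cube_eq_pre (N : ℕ) (b : EuclideanSpace ℝ (Fin N)) (ℓ : ℕ) (m : Fin N → ℕ) :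
    dyadicCube N b ℓ m = (WithLp.ofLp : EuclideanSpace ℝ (Fin N) → (Fin N → ℝ)) ⁻¹'
      (Set.univ.pi fun i => Set.Ioo (b i + (m i : ℝ) / 2 ^ ℓ) (b i + ((m i : ℝ) + 1) / 2 ^ ℓ)) := by
  ext x
  simp [dyadicCube]

theorem cube_meas (N : ℕ) (b : EuclideanSpace ℝ (Fin N)) (ℓ : ℕ) (m : Fin N → ℕ) :
    MeasurableSet (dyadicCube N b ℓ m) := by
  rw [cube_eq_pre]
  exact (PiLp.volume_preserving_ofLp (Fin N)).measurable
    (MeasurableSet.univ_pi fun i => measurableSet_Ioo)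

theorem cube_vol_zero (N : ℕ) (b : EuclideanSpace ℝ (Fin N)) :
    volume (dyadicCube N b 0 (fun _ => 0)) = 1 := by
  rw [cube_eq_pre, (PiLp.volume_preserving_ofLp (Fin N)).measure_preimage
    (MeasurableSet.univ_pi fun i => measurableSet_Ioo).nullMeasurableSet, Real.volume_pi_Ioo]
  simp

theorem hyper_null (N : ℕ) (i : Fin N) (c : ℝ) :
    volume {x : EuclideanSpace ℝ (Fin N) | x i = c} = 0 := by
  have h := (PiLp.volume_preserving_ofLp (Fin N)).measure_preimage
    (s := {y : Fin N → ℝ | y i = c})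
    (measurableSet_eq_fun (measurable_pi_apply i) measurable_const).nullMeasurableSet
  have h2 : volume {y : Fin N → ℝ | y i = c} = 0 :=
    Measure.pi_hyperplane (fun _ : Fin N => (volume : Measure ℝ)) i c
  rw [h2] at h
  exact h

def childIdx {N : ℕ} (m : Fin N → ℕ) (e : Fin N → Fin 2) : Fin N → ℕ :=
  fun i => 2 * m i + (e i : ℕ)

theorem child_sub (N : ℕ) (b : EuclideanSpace ℝ (Fin N)) (ℓ : ℕ) (m : Fin N → ℕ)
    (e : Fin N → Fin 2) :
    dyadicCube N b (ℓ + 1) (childIdx m e) ⊆ dyadicCube N b ℓ m := by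
  intro x hx i
  obtain ⟨h1, h2⟩ := hx i
  have hp : (0 : ℝ) < 2 ^ (ℓ + 1) := by positivity
  have e1 : (m i : ℝ) / 2 ^ ℓ = (2 * m i) / 2 ^ (ℓ + 1) := by
    rw [pow_succ]; field_simp
  have e2 : ((m i : ℝ) + 1) / 2 ^ ℓ = (2 * m i + 2) / 2 ^ (ℓ + 1) := by
    rw [pow_succ]; field_simp
  have he : ((e i : ℕ) : ℝ) ≤ 1 := by
    have := (e i).isLt
    exact_mod_cast (by omega : (e i : ℕ) ≤ 1)
  have he0 : (0 : ℝ) ≤ ((e i : ℕ) : ℝ) := Nat.cast_nonneg _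
  simp only [childIdx] at h1 h2
  push_cast at h1 h2
  rw [e1, e2]
  constructor
  · refine lt_of_le_of_lt ?_ h1
    gcongr
    linarith
  · refine lt_of_lt_of_le h2 ?_
    have h9 : (2 * (m i : ℝ) + ((e i : ℕ) : ℝ) + 1) / 2 ^ (ℓ + 1) ≤ (2 * (m i : ℝ) + 2) / 2 ^ (ℓ + 1) :=
      div_le_div_of_nonneg_right (by linarith) hp.le
    linarith

theorem cube_disj (N : ℕ) (b : EuclideanSpace ℝ (Fin N)) (ℓ : ℕ) (m m' : Fin N → ℕ)
    (h : m ≠ m') : Disjoint (dyadicCube N b ℓ m) (dyadicCube N b ℓ m') := by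
  rw [Set.disjoint_left]
  intro x hx hx'
  apply h
  funext i
  have hp : (0 : ℝ) < 2 ^ ℓ := by positivity
  obtain ⟨h1, h2⟩ := hx i
  obtain ⟨h3, h4⟩ := hx' i
  have a1 : (m i : ℝ) / 2 ^ ℓ < ((m' i : ℝ) + 1) / 2 ^ ℓ := by linarith
  have a2 : (m' i : ℝ) / 2 ^ ℓ < ((m i : ℝ) + 1) / 2 ^ ℓ := by linarith
  rw [div_lt_div_iff_of_pos_right hp] at a1 a2
  have b1 : m i < m' i + 1 := by exact_mod_cast a1
  have b2 : m' i < m i + 1 := by exact_mod_cast a2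
  omega

theorem child_ne {N : ℕ} (m : Fin N → ℕ) {e e' : Fin N → Fin 2} (h : e ≠ e') :
    childIdx m e ≠ childIdx m e' := by
  intro h'
  apply h
  funext i
  have := congrFun h' i
  simp only [childIdx] at this
  apply Fin.ext
  omega

theorem cube_cover (N : ℕ) (b : EuclideanSpace ℝ (Fin N)) (ℓ : ℕ) (m : Fin N → ℕ) :
    dyadicCube N b ℓ m ⊆ (⋃ e : Fin N → Fin 2, dyadicCube N b (ℓ + 1) (childIdx m e)) ∪
      ⋃ i : Fin N, {x : EuclideanSpace ℝ (Fin N) |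
        x i = b i + (2 * (m i : ℝ) + 1) / 2 ^ (ℓ + 1)} := by
  intro x hx
  by_cases hn : ∃ i, x i = b i + (2 * (m i : ℝ) + 1) / 2 ^ (ℓ + 1)
  · right
    simpa using hn
  left
  push Not at hn
  rw [Set.mem_iUnion]
  refine ⟨fun i => if x i < b i + (2 * (m i : ℝ) + 1) / 2 ^ (ℓ + 1) then 0 else 1, ?_⟩
  intro i
  obtain ⟨h1, h2⟩ := hx i
  have e1 : (m i : ℝ) / 2 ^ ℓ = (2 * m i) / 2 ^ (ℓ + 1) := by
    rw [pow_succ]; field_simp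
  have e2 : ((m i : ℝ) + 1) / 2 ^ ℓ = (2 * m i + 1 + 1) / 2 ^ (ℓ + 1) := by
    rw [pow_succ]; field_simp; ring
  rw [e1] at h1
  rw [e2] at h2
  simp only [childIdx]
  by_cases hc : x i < b i + (2 * (m i : ℝ) + 1) / 2 ^ (ℓ + 1)
  · rw [if_pos hc]
    push_cast
    simp only [Fin.val_zero, Nat.cast_zero, add_zero]
    exact ⟨h1, hc⟩
  · rw [if_neg hc]
    push_cast
    simp only [Fin.val_one, Nat.cast_one]
    exact ⟨lt_of_le_of_ne (not_lt.mp hc) (Ne.symm (hn i)), h2⟩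

theorem vol_split (N : ℕ) (b : EuclideanSpace ℝ (Fin N)) (A : Set (EuclideanSpace ℝ (Fin N)))
    (ℓ : ℕ) (m : Fin N → ℕ) :
    volume (A ∩ dyadicCube N b ℓ m) ≤
      ∑ e : Fin N → Fin 2, volume (A ∩ dyadicCube N b (ℓ + 1) (childIdx m e)) := by
  have h0 : volume (⋃ i : Fin N, {x : EuclideanSpace ℝ (Fin N) |
        x i = b i + (2 * (m i : ℝ) + 1) / 2 ^ (ℓ + 1)}) = 0 := by
    rw [measure_iUnion_null_iff]
    intro i
    exact hyper_null N i _
  calc volume (A ∩ dyadicCube N b ℓ m)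
      ≤ volume ((⋃ e : Fin N → Fin 2, A ∩ dyadicCube N b (ℓ + 1) (childIdx m e)) ∪
          ⋃ i : Fin N, {x : EuclideanSpace ℝ (Fin N) |
            x i = b i + (2 * (m i : ℝ) + 1) / 2 ^ (ℓ + 1)}) := by
        apply measure_mono
        rintro x ⟨hxA, hx⟩
        rcases cube_cover N b ℓ m hx with h | h
        · left
          rw [← Set.inter_iUnion]
          exact ⟨hxA, h⟩
        · right; exact h
    _ ≤ volume (⋃ e : Fin N → Fin 2, A ∩ dyadicCube N b (ℓ + 1) (childIdx m e)) + 0 := by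
        rw [← h0]; exact measure_union_le _ _
    _ ≤ _ := by
        rw [add_zero]
        exact measure_iUnion_fintype_le _ _

theorem sum_le_vol {N : ℕ} (B : (Fin N → Fin 2) → Set (EuclideanSpace ℝ (Fin N)))
    (S : Set (EuclideanSpace ℝ (Fin N)))
    (hm : ∀ e, MeasurableSet (B e)) (hd : ∀ e e', e ≠ e' → Disjoint (B e) (B e'))
    (hs : ∀ e, B e ⊆ S) : ∑ e, volume (B e) ≤ volume S := by
  rw [← tsum_fintype (L := SummationFilter.unconditional _), ← measure_iUnion (fun e e' h => hd e e' h) hm]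
  exact measure_mono (Set.iUnion_subset hs)

theorem cz_step (N : ℕ) (b : EuclideanSpace ℝ (Fin N))
    (A : Set (EuclideanSpace ℝ (Fin N))) (d' d : ℝ≥0∞) (L k : ℕ) :
    ∀ (ℓ : ℕ) (m : Fin N → ℕ), ℓ + k = L → (∀ i, m i < 2 ^ ℓ) →
    volume (A ∩ dyadicCube N b ℓ m) ≤ d * volume (dyadicCube N b ℓ m) →
    ∃ 𝒬 : Finset (ℕ × (Fin N → ℕ)),
      (∀ p ∈ 𝒬, dyadicCube N b p.1 p.2 ⊆ dyadicCube N b ℓ m) ∧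
      (∀ p ∈ 𝒬, p.1 ≤ L ∧ ∀ i, p.2 i < 2 ^ p.1) ∧
      (∀ p ∈ 𝒬, ∀ q ∈ 𝒬, p ≠ q →
        Disjoint (dyadicCube N b p.1 p.2) (dyadicCube N b q.1 q.2)) ∧
      (∀ p ∈ 𝒬, volume (A ∩ dyadicCube N b p.1 p.2) ≤
        d * volume (dyadicCube N b p.1 p.2)) ∧
      (∀ p ∈ 𝒬,
        (∃ m' : Fin N → ℕ, (∀ i, m' i = 2 * p.2 i ∨ m' i = 2 * p.2 i + 1) ∧
          d * volume (dyadicCube N b (p.1 + 1) m') <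
            volume (A ∩ dyadicCube N b (p.1 + 1) m')) ∨
        (p.1 = L ∧ d' * volume (dyadicCube N b p.1 p.2) <
          volume (A ∩ dyadicCube N b p.1 p.2))) ∧
      volume (A ∩ dyadicCube N b ℓ m) ≤
        d * volume (⋃ p ∈ (𝒬 : Set (ℕ × (Fin N → ℕ))), dyadicCube N b p.1 p.2) +
          d' * volume (dyadicCube N b ℓ m) := by
  classical
  induction k with
  | zero =>
    intro ℓ m hL hm hd
    by_cases hc : d' * volume (dyadicCube N b ℓ m) < volume (A ∩ dyadicCube N b ℓ m)
    · refine ⟨{(ℓ, m)}, ?_, ?_, ?_, ?_, ?_, ?_⟩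
      · simp
      · simpa using ⟨by omega, hm⟩
      · intro p hp q hq hpq
        rw [Finset.mem_singleton] at hp hq
        exact absurd (hp.trans hq.symm) hpq
      · simpa using hd
      · intro p hp
        rw [Finset.mem_singleton] at hp
        subst hp
        right
        exact ⟨by simpa using hL, hc⟩
      · simpa using le_add_right hd
    · refine ⟨∅, by simp, by simp, by simp, by simp, by simp, ?_⟩
      simpa using hc
  | succ k ih =>
    intro ℓ m hL hm hd
    by_cases hc : ∃ e : Fin N → Fin 2, d * volume (dyadicCube N b (ℓ + 1) (childIdx m e)) <
        volume (A ∩ dyadicCube N b (ℓ + 1) (childIdx m e))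
    · obtain ⟨e, he⟩ := hc
      refine ⟨{(ℓ, m)}, ?_, ?_, ?_, ?_, ?_, ?_⟩
      · simp
      · simpa using ⟨by omega, hm⟩
      · intro p hp q hq hpq
        rw [Finset.mem_singleton] at hp hq
        exact absurd (hp.trans hq.symm) hpq
      · simpa using hd
      · intro p hp
        rw [Finset.mem_singleton] at hp
        subst hp
        left
        refine ⟨childIdx m e, ?_, he⟩
        intro i
        have := (e i).isLt
        simp only [childIdx]
        omega
      · simpa using le_add_right hd
    · push Not at hc
      have hex := fun e => ih (ℓ + 1) (childIdx m e) (by omega) (by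
        intro i
        have h1 := (e i).isLt
        have h2 := hm i
        simp only [childIdx, pow_succ]
        omega) (hc e)
      choose F h1 h2 h3 h4 h5 h6 using hex
      have hdis : ∀ e e', e ≠ e' → Disjoint (dyadicCube N b (ℓ + 1) (childIdx m e))
          (dyadicCube N b (ℓ + 1) (childIdx m e')) := fun e e' h =>
        cube_disj N b _ _ _ (child_ne m h)
      have hBs : ∀ e, (⋃ p ∈ (F e : Set (ℕ × (Fin N → ℕ))), dyadicCube N b p.1 p.2) ⊆
          dyadicCube N b (ℓ + 1) (childIdx m e) := fun e =>
        Set.iUnion₂_subset fun p hp => h1 e p hp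
      refine ⟨Finset.univ.biUnion F, ?_, ?_, ?_, ?_, ?_, ?_⟩
      · intro p hp
        obtain ⟨e, -, he⟩ := Finset.mem_biUnion.mp hp
        exact (h1 e p he).trans (child_sub N b ℓ m e)
      · intro p hp
        obtain ⟨e, -, he⟩ := Finset.mem_biUnion.mp hp
        exact h2 e p he
      · intro p hp q hq hpq
        obtain ⟨e, -, he⟩ := Finset.mem_biUnion.mp hp
        obtain ⟨e', -, he'⟩ := Finset.mem_biUnion.mp hq
        by_cases hee : e = e'
        · subst hee
          exact h3 e p he q he' hpq
        · exact (hdis e e' hee).mono (h1 e p he) (h1 e' q he')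
      · intro p hp
        obtain ⟨e, -, he⟩ := Finset.mem_biUnion.mp hp
        exact h4 e p he
      · intro p hp
        obtain ⟨e, -, he⟩ := Finset.mem_biUnion.mp hp
        exact h5 e p he
      · refine (vol_split N b A ℓ m).trans ((Finset.sum_le_sum fun e _ => h6 e).trans ?_)
        rw [Finset.sum_add_distrib, ← Finset.mul_sum, ← Finset.mul_sum]
        gcongr
        · apply sum_le_vol
          · intro e
            exact (F e).measurableSet_biUnion fun p _ => cube_meas N b _ _
          · intro e e' h
            exact (hdis e e' h).mono (hBs e) (hBs e')
          · intro e
            refine Set.biUnion_subset_biUnion_left ?_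
            intro p hp
            exact Finset.mem_biUnion.mpr ⟨e, Finset.mem_univ _, hp⟩
        · exact sum_le_vol _ _ (fun e => cube_meas N b _ _) hdis (child_sub N b ℓ m)

/-- Calderón–Zygmund type decomposition stopped at generation `L`. -/
theorem calderon_zygmund (N : ℕ) (hN : 1 ≤ N) (b : EuclideanSpace ℝ (Fin N))
    (A : Set (EuclideanSpace ℝ (Fin N))) (hA : MeasurableSet A)
    (hAQ : A ⊆ dyadicCube N b 0 (fun _ => 0))
    (δ' δ : ℝ) (hδ'0 : 0 < δ') (hδ'δ : δ' < δ) (hδ1 : δ < 1)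
    (hAδ : volume A ≤ ENNReal.ofReal δ) (L : ℕ) :
    ∃ 𝒬 : Finset (ℕ × (Fin N → ℕ)),
      (∀ p ∈ 𝒬, p.1 ≤ L ∧ ∀ i, p.2 i < 2 ^ p.1) ∧
      (∀ p ∈ 𝒬, ∀ q ∈ 𝒬, p ≠ q →
        Disjoint (dyadicCube N b p.1 p.2) (dyadicCube N b q.1 q.2)) ∧
      (∀ p ∈ 𝒬, volume (A ∩ dyadicCube N b p.1 p.2) ≤
        ENNReal.ofReal δ * volume (dyadicCube N b p.1 p.2)) ∧
      (∀ p ∈ 𝒬,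
        (∃ m' : Fin N → ℕ, (∀ i, m' i = 2 * p.2 i ∨ m' i = 2 * p.2 i + 1) ∧
          ENNReal.ofReal δ * volume (dyadicCube N b (p.1 + 1) m') <
            volume (A ∩ dyadicCube N b (p.1 + 1) m')) ∨
        (p.1 = L ∧ ENNReal.ofReal δ' * volume (dyadicCube N b p.1 p.2) <
          volume (A ∩ dyadicCube N b p.1 p.2))) ∧
      volume A ≤
        ENNReal.ofReal δ * volume (⋃ p ∈ (𝒬 : Set (ℕ × (Fin N → ℕ))), dyadicCube N b p.1 p.2) +
          ENNReal.ofReal δ' := by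
  have hv := cube_vol_zero N b
  have hi : A ∩ dyadicCube N b 0 (fun _ => 0) = A := Set.inter_eq_left.mpr hAQ
  obtain ⟨Q, -, h2, h3, h4, h5, h6⟩ := cz_step N b A (ENNReal.ofReal δ') (ENNReal.ofReal δ) L L 0
    (fun _ => 0) (by simp) (by simp) (by rw [hi, hv, mul_one]; exact hAδ)
  rw [hi, hv, mul_one] at h6
  exact ⟨Q, h2, h3, h4, h5, h6⟩
end
end
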